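/- arXiv:2505.07645 — 2 statements merged into one kernel-verified Lean document; each statement's English description precedes it below -/
import Mathlib

section
/- Let q be a prime power, let n ≥ 6, and let Q_1, Q_2 ∈ F_q[x_1,…,x_n] be quadratic forms whose common zero locus X = V(Q_1,Q_2) ⊂ P^{n-1} is a smooth complete intersection of codimension 2 over \bar{F}_q. Then there exists a constant c > 0 (depending on q, n, Q_1, Q_2 but not on e) such that for every e ≥ 1, the number of tuples (x_1(t),…,x_n(t)) ∈ F_q[t]^n with gcd(x_1,…,x_n) = 1 in F_q[t], max_i deg x_i = e, and Q_1(x(t)) = Q_2(x(t)) = 0 in F_q[t], is at most c · 16^e · q^{e(n−4)}. Equivalently, N_X(e) = O(16^e q^{e(n−4)}). -/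
open MvPolynomial

/-! The coefficients of a vector of polynomials of degree at most `e` in `n` variables are `n (e + 1)`
unknowns, and `Q₁ = Q₂ = 0` amounts to `2 (2 e + 1)` quadratic equations in them. The bound
`16 ^ e = 2 ^ (4 e)` is the Bézout number of these equations, and `q ^ (e (n - 4) + n - 2)` comes from
completing them to as many equations as unknowns with the help of Frobenius.

The geometric input is that the cone of solutions has dimension at most `d = e (n - 4) + n - 2`, in
the strong form that over some algebraically closed extension `Ω` of `F_q` there are `d` linear forms
`ℓ j` which together with the coefficient equations have only the zero solution
(`Nonsing.exists_linearForms`). It is proved by degeneration. Substituting `s ^ (m ^ 2) * w m` for the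
coefficient of `t ^ m` and letting `s` tend to `0` in a valuation ring turns the coefficient equations
into `Q j (w m) = 0` and `B j (w m, w (m + 1)) = 0`, where `B j` is the polar form
(`Nonsing.eq_zero_of_degeneration`). For such a chain the transcendence degree of the coordinates is
at most `d` (`Nonsing.chain`): the first point contributes at most `n - 2`, and each following one at
most `n - 4`, because it lies on the intersection of `X` with the tangent space at the preceding point.
This intersection has codimension `2` in the tangent space, since by smoothness the two forms remain
coprime on subspaces of codimension `2` (`Nonsing.isRelPrime`), which is where `n ≥ 6` enters. A chain
that vanishes somewhere may restart at an arbitrary point of `X`, at a total cost that is still at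
most `d`. Hence `d` generic linear forms leave only the zero chain (`generic_forms_no_zero`), and
properness carries this over to the original equations.

On vectors with coordinates in `F_q`, the `q`-th power of `ℓ j` agrees with the linear form `m j` whose
coefficients are the `q`-th powers of those of `ℓ j`. So all the points to be counted are zeros of the
coefficient forms and of the `d` polynomials `ℓ j ^ q - m j`. The leading forms of this system of
`n (e + 1)` polynomials have no common zero but the origin, so the polynomial ring is integral over the
subring they generate (`isIntegral_of_leadingForms`) and Bézout's inequality (`card_le_prod`) bounds
the number of zeros by `2 ^ (4 e + 2) * q ^ d`. Smoothness over the algebraic closure passes to all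
extension fields by the Nullstellensatz (`Nonsing.transfer`). -/

/-! ### Counting exponent vectors -/

/-- If `H` grows polynomially, then `s * H k ≤ D * H (k + s)` for all `k` forces `s ≤ D`: otherwise
iterating gives the exponential lower bound `H (j * s) ≥ ((D + 1) / D) ^ j`. -/
lemma le_of_polynomial_growth {H : ℕ → ℕ} {N s D : ℕ} (h0 : 1 ≤ H 0)
    (hH : ∀ k, H k ≤ (k + 1) ^ N) (h : ∀ k, s * H k ≤ D * H (k + s)) : s ≤ D := by
  by_contra! hlt
  rcases Nat.eq_zero_or_pos D with rfl | hD
  · have := h 0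
    simp only [zero_mul, nonpos_iff_eq_zero, mul_eq_zero] at this
    omega
  have key : ∀ j : ℕ, (D + 1) ^ j ≤ D ^ j * H (j * s) := by
    intro j
    induction j with
    | zero => simpa using h0
    | succ j ih =>
      calc (D + 1) ^ (j + 1) = (D + 1) * (D + 1) ^ j := by ring
        _ ≤ s * (D ^ j * H (j * s)) := Nat.mul_le_mul hlt ih
        _ = D ^ j * (s * H (j * s)) := by ring
        _ ≤ D ^ j * (D * H (j * s + s)) := Nat.mul_le_mul_left _ (h _)
        _ = D ^ (j + 1) * H ((j + 1) * s) := by ring_nf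
  have hDr : (0 : ℝ) < D := by exact_mod_cast hD
  have hr : (1 : ℝ) < ((D : ℝ) + 1) / D := by rw [lt_div_iff₀ hDr]; linarith
  have ht := tendsto_pow_const_div_const_pow_of_one_lt N hr
  have hpos : (0 : ℝ) < 1 / ((s : ℝ) + 1) ^ N := by positivity
  obtain ⟨j, hj, hj1⟩ := ((ht.eventually (gt_mem_nhds hpos)).and
    (Filter.eventually_ge_atTop 1)).exists
  have h1 : ((D : ℝ) + 1) ^ j ≤ (D : ℝ) ^ j * ((j : ℝ) * (s + 1)) ^ N := by
    have h2 : (D + 1) ^ j ≤ D ^ j * (j * (s + 1)) ^ N :=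
      (key j).trans (Nat.mul_le_mul_left _ ((hH _).trans (Nat.pow_le_pow_left (by nlinarith) _)))
    exact_mod_cast h2
  rw [div_lt_div_iff₀ (by positivity) (by positivity), div_pow, mul_pow] at *
  rw [one_mul, lt_div_iff₀ (by positivity)] at hj
  nlinarith

/-- The exponent vectors `m` of weighted degree at most `k`, the variable `a` having
weight `d a` (all weights being positive). -/
def expts (σ : Type) [Fintype σ] [DecidableEq σ] (d : σ → ℕ) (k : ℕ) : Finset (σ → ℕ) :=
  (Fintype.piFinset fun _ => Finset.range (k + 1)).filter fun m => ∑ a, d a * m a ≤ k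

lemma mem_expts {σ : Type} [Fintype σ] [DecidableEq σ] {d : σ → ℕ} (hd : ∀ a, 0 < d a) {k : ℕ}
    {m : σ → ℕ} : m ∈ expts σ d k ↔ ∑ a, d a * m a ≤ k := by
  simp only [expts, Finset.mem_filter, Fintype.mem_piFinset, Finset.mem_range, and_iff_right_iff_imp]
  intro h a
  have h1 : d a * m a ≤ ∑ a, d a * m a :=
    Finset.single_le_sum (f := fun a => d a * m a) (fun _ _ => Nat.zero_le _) (Finset.mem_univ a)
  have := hd a
  nlinarith

/-- Division with remainder of each exponent by its weight shows that passing to the weights `d`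
loses at most the factor `∏ d a`. -/
lemma card_expts_one_le {σ : Type} [Fintype σ] [DecidableEq σ] {d : σ → ℕ} (hd : ∀ a, 0 < d a)
    (k : ℕ) : (expts σ (fun _ => 1) k).card ≤ (∏ a, d a) * (expts σ d k).card := by
  classical
  have hcard : ((Fintype.piFinset fun a => Finset.range (d a)) ×ˢ expts σ d k).card
      = (∏ a, d a) * (expts σ d k).card := by
    rw [Finset.card_product, Fintype.card_piFinset]; simp
  rw [← hcard]
  refine Finset.card_le_card_of_injOn (fun m => (fun a => m a % d a, fun a => m a / d a)) ?_ ?_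
  · intro m hm
    have hm' := (mem_expts (fun _ => one_pos)).1 (Finset.mem_coe.1 hm)
    simp only [Finset.coe_product, Set.mem_prod, Finset.mem_coe, Fintype.mem_piFinset,
      Finset.mem_range]
    refine ⟨fun a => Nat.mod_lt _ (hd a), (mem_expts hd).2 ?_⟩
    refine le_trans (Finset.sum_le_sum fun a _ => ?_) hm'
    rw [one_mul]; exact Nat.mul_div_le _ _
  · intro m _ m' _ h
    simp only [Prod.mk.injEq] at h
    funext a
    rw [← Nat.div_add_mod (m a) (d a), ← Nat.div_add_mod (m' a) (d a), congrFun h.1 a,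
      congrFun h.2 a]

lemma card_expts_le (σ : Type) [Fintype σ] [DecidableEq σ] (d : σ → ℕ) (k : ℕ) :
    (expts σ d k).card ≤ (k + 1) ^ Fintype.card σ := by
  refine (Finset.card_filter_le _ _).trans ?_
  rw [Fintype.card_piFinset]; simp

lemma card_expts_one_congr {σ τ : Type} [Fintype σ] [DecidableEq σ] [Fintype τ] [DecidableEq τ]
    (e : σ ≃ τ) (k : ℕ) :
    (expts σ (fun _ => 1) k).card = (expts τ (fun _ => 1) k).card := by
  refine Finset.card_equiv (Equiv.arrowCongr e (Equiv.refl ℕ)) fun m => ?_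
  rw [mem_expts (fun _ => one_pos), mem_expts (fun _ => one_pos)]
  simp only [one_mul, Equiv.arrowCongr_apply, Equiv.coe_refl, Function.comp_apply, id_eq]
  rw [Equiv.sum_comp e.symm m]

/-- If the `F a` have degree at most `d a` and `1, x, …, x ^ (s - 1)` are linearly
independent over the polynomial ring `Ω[F]`, where `x` has degree at most `1`, then `s ≤ ∏ d a`. The
products `F ^ m * x ^ j` of bounded degree are linearly independent and too many otherwise. -/
lemma le_prod_of_indep {Ω ι α : Type} [Field Ω] [Fintype ι] [Fintype α]
    (hcard : Fintype.card α = Fintype.card ι) (F : α → MvPolynomial ι Ω) (d : α → ℕ)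
    (hd : ∀ a, 0 < d a) (hdeg : ∀ a, (F a).totalDegree ≤ d a) (x : MvPolynomial ι Ω)
    (hx : x.totalDegree ≤ 1) (s : ℕ)
    (hs : ∀ c : Fin s → MvPolynomial α Ω, ∑ j, aeval F (c j) * x ^ (j : ℕ) = 0 → c = 0) :
    s ≤ ∏ a, d a := by
  classical
  -- the products `F ^ m * x ^ j` with `m` of weight at most `k` and `j < s` have degree at most `k + s`
  have hmain : ∀ k, s * (expts α d k).card ≤ (expts ι (fun _ => 1) (k + s)).card := by
    intro k
    let v : Fin s × expts α d k → MvPolynomial ι Ω :=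
      fun p => aeval F (monomial (Finsupp.equivFunOnFinite.symm p.2.1) (1 : Ω)) * x ^ (p.1 : ℕ)
    have hv : LinearIndependent Ω v := by
      rw [Fintype.linearIndependent_iff]
      intro g hg
      let c : Fin s → MvPolynomial α Ω := fun j =>
        ∑ m : expts α d k, monomial (Finsupp.equivFunOnFinite.symm m.1) (g (j, m))
      have hc : c = 0 := by
        apply hs
        rw [← hg, Fintype.sum_prod_type]
        refine Finset.sum_congr rfl fun j _ => ?_
        simp only [c, v, map_sum, Finset.sum_mul]
        refine Finset.sum_congr rfl fun m _ => ?_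
        rw [show monomial (Finsupp.equivFunOnFinite.symm m.1) (g (j, m))
            = g (j, m) • monomial (Finsupp.equivFunOnFinite.symm m.1) (1 : Ω) by
          rw [smul_monomial, smul_eq_mul, mul_one], map_smul, smul_mul_assoc]
      rintro ⟨j, m⟩
      have := congrArg (coeff (Finsupp.equivFunOnFinite.symm m.1)) (congrFun hc j)
      simp only [c, coeff_sum, coeff_monomial, Pi.zero_apply, coeff_zero,
        EmbeddingLike.apply_eq_iff_eq, Subtype.coe_inj] at this
      simpa using this
    let w : Finset (MvPolynomial ι Ω) := (expts ι (fun _ => 1) (k + s)).image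
      fun m => monomial (Finsupp.equivFunOnFinite.symm m) (1 : Ω)
    have hspan : Set.range v ≤ Submodule.span Ω (w : Set (MvPolynomial ι Ω)) := by
      rintro _ ⟨⟨j, m⟩, rfl⟩
      have hdegv : (v (j, m)).totalDegree ≤ k + s := by
        refine (totalDegree_mul _ _).trans (add_le_add ?_ ?_)
        · rw [aeval_monomial, map_one, one_mul, Finsupp.prod_fintype _ _ (by simp)]
          refine (totalDegree_finsetProd _ _).trans
            (le_trans (Finset.sum_le_sum fun a _ => ?_) ((mem_expts hd).1 m.2))
          refine (totalDegree_pow _ _).trans ?_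
          rw [mul_comm]
          exact Nat.mul_le_mul_right _ (hdeg a)
        · refine (totalDegree_pow _ _).trans ?_
          have := j.2
          nlinarith
      rw [(v (j, m)).as_sum]
      refine Submodule.sum_mem _ fun u hu => ?_
      rw [show monomial u (coeff u (v (j, m))) = coeff u (v (j, m)) • monomial u (1 : Ω) by
        rw [smul_monomial, smul_eq_mul, mul_one]]
      refine Submodule.smul_mem _ _ (Submodule.subset_span ?_)
      refine Finset.mem_coe.2 (Finset.mem_image.2 ⟨Finsupp.equivFunOnFinite u, ?_, by simp⟩)
      rw [mem_expts (fun _ => one_pos)]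
      refine le_trans ?_ ((le_totalDegree hu).trans hdegv)
      rw [Finsupp.sum_fintype _ _ (by simp)]
      simp
    have h1 := linearIndependent_le_span_aux' v hv (w : Set (MvPolynomial ι Ω)) hspan
    have h2 : w.card ≤ (expts ι (fun _ => 1) (k + s)).card := Finset.card_image_le
    rw [Fintype.card_prod, Fintype.card_fin, Fintype.card_coe] at h1
    simp only [Finset.coe_sort_coe, Fintype.card_coe] at h1
    exact h1.trans h2
  refine le_of_polynomial_growth (H := fun k => (expts ι (fun _ => 1) k).card)
    (N := Fintype.card ι) ?_ (card_expts_le _ _) ?_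
  · exact Finset.card_pos.2 ⟨0, (mem_expts (fun _ => one_pos)).2 (by simp)⟩
  · intro k
    have e := Fintype.equivOfCardEq hcard
    calc s * (expts ι (fun _ => 1) k).card = s * (expts α (fun _ => 1) k).card := by
          rw [card_expts_one_congr e]
      _ ≤ s * ((∏ a, d a) * (expts α d k).card) :=
          Nat.mul_le_mul_left _ (card_expts_one_le hd k)
      _ = (∏ a, d a) * (s * (expts α d k).card) := by ring
      _ ≤ _ := Nat.mul_le_mul_left _ (hmain k)

/-! ### Bézout's inequality -/

/-- A form of Bézout's inequality: if the polynomial ring is integral over `Ω[F]`, the `F a` being as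
many as the variables, then the `F a` have at most `∏ d a` common zeros. A linear form `x` that
separates the zeros is integral over `Ω[F]`, its minimal polynomial has degree at most `∏ d a` by
`le_prod_of_indep`, and setting `F = 0` in it gives a polynomial vanishing at all the values of
`x`. -/
lemma card_le_prod {Ω ι α : Type} [Field Ω] [Infinite Ω] [Fintype ι] [Fintype α]
    (hcard : Fintype.card α = Fintype.card ι) (F : α → MvPolynomial ι Ω) (d : α → ℕ)
    (hd : ∀ a, 0 < d a) (hdeg : ∀ a, (F a).totalDegree ≤ d a)
    (hintegral : (aeval (R := Ω) F).toRingHom.IsIntegral)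
    (S : Finset (ι → Ω)) (hS : ∀ p ∈ S, ∀ a, eval p (F a) = 0) :
    S.card ≤ ∏ a, d a := by
  classical
  -- the `F a` are algebraically independent, for transcendence degree reasons
  have hind : AlgebraicIndependent Ω F := by
    have halg : Algebra.IsAlgebraic (Algebra.adjoin Ω (Set.range F)) (MvPolynomial ι Ω) := by
      constructor
      intro p
      refine IsIntegral.isAlgebraic ?_
      obtain ⟨P, hP, hP'⟩ := hintegral p
      refine ⟨P.map ((aeval (R := Ω) F).codRestrict (Algebra.adjoin Ω (Set.range F)) fun c => by
        rw [Algebra.adjoin_range_eq_range_aeval]; exact ⟨c, rfl⟩).toRingHom, hP.map _, ?_⟩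
      rw [Polynomial.eval₂_map]
      exact hP'
    refine (Algebra.IsAlgebraic.isTranscendenceBasis_of_le_trdeg_of_finite Ω F ?_).1
    rw [MvPolynomial.trdeg_of_isDomain]
    simp [hcard]
  -- a linear form separating the points of `S`
  obtain ⟨f, hf⟩ := Module.exists_dual_forall_apply_ne_zero (K := Ω)
    (fun pq : {pq : S × S // pq.1 ≠ pq.2} => (pq.1.1 : ι → Ω) - pq.1.2)
    (fun pq => sub_ne_zero.2 fun h => pq.2 (Subtype.ext h))
  let x : MvPolynomial ι Ω := ∑ i, C (f (Pi.single i 1)) * X i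
  have hxe : ∀ p, eval p x = f p := by
    intro p
    rw [LinearMap.pi_apply_eq_sum_univ f p]
    simp only [x, map_sum, map_mul, eval_C, eval_X, smul_eq_mul]
    refine Finset.sum_congr rfl fun i _ => ?_
    rw [mul_comm]; congr 2; ext j; simp [Pi.single_apply, eq_comm]
  have hxd : x.totalDegree ≤ 1 := by
    refine (totalDegree_finsetSum _ _).trans (Finset.sup_le fun i _ => ?_)
    refine (totalDegree_mul _ _).trans ?_
    rw [totalDegree_C, totalDegree_X]
  let _ : Algebra (MvPolynomial α Ω) (MvPolynomial ι Ω) := (aeval (R := Ω) F).toAlgebra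
  have halgmap : ∀ c : MvPolynomial α Ω, algebraMap _ (MvPolynomial ι Ω) c = aeval F c :=
    fun c => rfl
  have hinj : Function.Injective (algebraMap (MvPolynomial α Ω) (MvPolynomial ι Ω)) := hind
  have : FaithfulSMul (MvPolynomial α Ω) (MvPolynomial ι Ω) :=
    (faithfulSMul_iff_algebraMap_injective _ _).2 hinj
  have hxint : IsIntegral (MvPolynomial α Ω) x := hintegral x
  set μ := minpoly (MvPolynomial α Ω) x with hμ
  have hmonic : μ.Monic := minpoly.monic hxint
  have hle : μ.natDegree ≤ ∏ a, d a := by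
    refine le_prod_of_indep hcard F d hd hdeg x hxd _ fun c hc => ?_
    by_contra hne
    let P : Polynomial (MvPolynomial α Ω) := ∑ j : Fin μ.natDegree, Polynomial.monomial (j : ℕ) (c j)
    have hPc : ∀ j : Fin μ.natDegree, P.coeff j = c j := by
      intro j
      simp [P, Polynomial.finsetSum_coeff, Polynomial.coeff_monomial, Fin.val_inj]
    have hP0 : P ≠ 0 := by
      rintro h
      apply hne
      funext j
      rw [← hPc, h]; simp
    have hPx : Polynomial.aeval x P = 0 := by
      rw [← hc]
      simp only [P, map_sum, Polynomial.aeval_monomial, halgmap]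
    have h1 := minpoly.IsIntegrallyClosed.degree_le_of_ne_zero hP0 hPx
    have h2 : P.degree < μ.natDegree := by
      refine (Polynomial.degree_lt_iff_coeff_zero _ _).2 fun m hm => ?_
      simp only [P, Polynomial.finsetSum_coeff, Polynomial.coeff_monomial]
      refine Finset.sum_eq_zero fun j _ => if_neg ?_
      have := j.2
      omega
    rw [Polynomial.degree_eq_natDegree hmonic.ne_zero] at h1
    exact absurd (h1.trans_lt h2) (lt_irrefl _)
  -- reducing the equation of `x` at the points of `S` gives one polynomial for all of them
  refine le_trans ?_ hle
  let ν : Polynomial Ω := μ.map (eval (0 : α → Ω))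
  have hνm : ν.Monic := hmonic.map _
  have hroot : ∀ p ∈ S, ν.eval (f p) = 0 := by
    intro p hp
    have h0 : Polynomial.aeval x μ = 0 := minpoly.aeval _ _
    have h1 := congrArg (eval p) h0
    rw [Polynomial.aeval_def, Polynomial.hom_eval₂, map_zero, hxe] at h1
    rw [Polynomial.eval_map, ← h1]
    congr 1
    refine MvPolynomial.ringHom_ext (fun r => ?_) fun a => ?_
    · simp [halgmap]
    · simp [halgmap, hS p hp a]
  calc S.card = (S.image f).card := by
        refine (Finset.card_image_of_injOn fun p hp q hq h => ?_).symm
        by_contra hpq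
        refine hf ⟨(⟨p, hp⟩, ⟨q, hq⟩), fun h => hpq (congrArg Subtype.val h)⟩ ?_
        simp only [map_sub]
        exact sub_eq_zero.2 h
    _ ≤ ν.roots.toFinset.card := by
        refine Finset.card_le_card fun y hy => ?_
        obtain ⟨p, hp, rfl⟩ := Finset.mem_image.1 hy
        rw [Multiset.mem_toFinset, Polynomial.mem_roots hνm.ne_zero]
        exact hroot p hp
    _ ≤ ν.natDegree := (Multiset.toFinset_card_le _).trans (Polynomial.card_roots' _)
    _ = μ.natDegree := hmonic.natDegree_map _

/-! ### Integrality over the ring generated by polynomials without common zeros at infinity -/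

/-- The homogeneous components of a multiple of the form `t` are multiples of `t`, with a control on
the degree of the cofactor. -/
lemma exists_homogeneousComponent_mul {R ι : Type} [CommRing R] (c t : MvPolynomial ι R)
    {d : ℕ} (ht : t.IsHomogeneous d) (D : ℕ) :
    ∃ g, homogeneousComponent D (c * t) = g * t ∧ (g = 0 ∨ g.totalDegree + d ≤ D) := by
  by_cases h : d ≤ D
  · obtain ⟨j, rfl⟩ := Nat.exists_eq_add_of_le' h
    refine ⟨homogeneousComponent j c, ?_, Or.inr (Nat.add_le_add_right
      (homogeneousComponent_isHomogeneous j c).totalDegree_le _)⟩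
    conv_lhs => rw [← sum_homogeneousComponent c, Finset.sum_mul, map_sum]
    have : ∀ i ∈ Finset.range (c.totalDegree + 1),
        homogeneousComponent (j + d) (homogeneousComponent i c * t)
        = if i = j then homogeneousComponent j c * t else 0 := by
      intro i _
      rw [homogeneousComponent_of_mem ((homogeneousComponent_isHomogeneous i c).mul ht)]
      by_cases hij : i = j
      · subst hij; simp
      · rw [if_neg hij, if_neg (by omega)]
    rw [Finset.sum_congr rfl this, Finset.sum_ite_eq']
    split_ifs with hj
    · rfl
    · rw [homogeneousComponent_eq_zero _ _ (by simpa using hj), zero_mul]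
  · refine ⟨0, ?_, Or.inl rfl⟩
    conv_lhs => rw [← sum_homogeneousComponent c, Finset.sum_mul, map_sum]
    rw [zero_mul]
    refine Finset.sum_eq_zero fun i _ => ?_
    rw [homogeneousComponent_of_mem ((homogeneousComponent_isHomogeneous i c).mul ht),
      if_neg (by omega)]

/-- If the leading forms `t a` of the `F a` have no common zero but the origin, then the polynomial
ring is integral over `Ω[F]`. By the Nullstellensatz every monomial of large degree lies in the
ideal of the leading forms, which allows its degree to be lowered modulo `Ω[F]`-combinations of
polynomials of smaller degree. -/
lemma isIntegral_of_leadingForms {Ω ι α : Type} [Field Ω] [IsAlgClosed Ω] [Fintype ι] [Fintype α]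
    (F t : α → MvPolynomial ι Ω) (d : α → ℕ) (hd : ∀ a, 0 < d a)
    (ht : ∀ a, (t a).IsHomogeneous (d a)) (hFt : ∀ a, (F a - t a).totalDegree < d a)
    (hzero : ∀ p : ι → Ω, (∀ a, eval p (t a) = 0) → p = 0) :
    (aeval (R := Ω) F).toRingHom.IsIntegral := by
  classical
  have hrad : ∀ i, ∃ M, (X i : MvPolynomial ι Ω) ^ M ∈ Ideal.span (Set.range t) := by
    intro i
    have : (X i : MvPolynomial ι Ω) ∈ (Ideal.span (Set.range t)).radical := by
      rw [← vanishingIdeal_zeroLocus_eq_radical (K := Ω), zeroLocus_span,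
        mem_vanishingIdeal_iff]
      intro p hp
      rw [hzero p fun a => by simpa [aeval_eq_eval] using hp (t a) ⟨a, rfl⟩]
      simp
    exact this
  choose M hM using hrad
  set D₀ := ∑ i, M i with hD₀
  let _ : Algebra (MvPolynomial α Ω) (MvPolynomial ι Ω) := (aeval (R := Ω) F).toAlgebra
  have hsmul : ∀ (c : MvPolynomial α Ω) (p : MvPolynomial ι Ω), c • p = aeval F c * p :=
    fun c p => rfl
  let B : Finset (MvPolynomial ι Ω) := (expts ι (fun _ => 1) D₀).image
      fun m => monomial (Finsupp.equivFunOnFinite.symm m) (1 : Ω)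
  let W : Submodule (MvPolynomial α Ω) (MvPolynomial ι Ω) := Submodule.span _ (B : Set _)
  -- the monomials of degree at most `D₀` generate: induction on the degree of `p`
  have hW : ∀ D, ∀ p : MvPolynomial ι Ω, p.totalDegree ≤ D → p ∈ W := by
    intro D
    induction D using Nat.strong_induction_on with
    | _ D ih =>
    intro p hp
    rw [p.as_sum]
    refine Submodule.sum_mem _ fun u hu => ?_
    have huD : ∑ i, u i ≤ D := by
      have := (le_totalDegree hu).trans hp
      rwa [Finsupp.sum_fintype _ _ (by simp)] at this
    have hmon : monomial u (coeff u p) = (C (coeff u p) : MvPolynomial α Ω) •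
        (monomial u (1 : Ω) : MvPolynomial ι Ω) := by
      rw [hsmul, algHom_C, algebraMap_eq, C_mul_monomial, mul_one]
    rw [hmon]
    refine Submodule.smul_mem _ _ ?_
    by_cases hsmall : ∑ i, u i ≤ D₀
    · refine Submodule.subset_span (Finset.mem_coe.2 (Finset.mem_image.2
        ⟨Finsupp.equivFunOnFinite u, (mem_expts (fun _ => one_pos)).2 ?_, by simp⟩))
      simpa using hsmall
    -- some exponent is large, so the monomial lies in the ideal of leading forms
    obtain ⟨i, -, hi⟩ : ∃ i ∈ Finset.univ, M i < u i :=
      Finset.exists_lt_of_sum_lt (by simpa using hsmall)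
    have hmem : (monomial u (1 : Ω) : MvPolynomial ι Ω) ∈ Ideal.span (Set.range t) := by
      refine Ideal.mem_of_dvd _ ?_ (hM i)
      rw [X_pow_eq_monomial, monomial_dvd_monomial]
      refine ⟨Or.inr ?_, one_dvd _⟩
      intro j
      rw [Finsupp.single_apply]
      split_ifs with h
      · rw [← h]; exact hi.le
      · exact Nat.zero_le _
    obtain ⟨c, hc⟩ := Ideal.mem_span_range_iff_exists_fun.1 hmem
    choose g hg hg' using fun a => exists_homogeneousComponent_mul (c a) (t a) (ht a) (∑ i, u i)
    have hmon2 : (monomial u (1 : Ω) : MvPolynomial ι Ω) = ∑ a, g a * t a := by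
      have h1 : homogeneousComponent (∑ i, u i) (monomial u (1 : Ω)) = monomial u (1 : Ω) := by
        refine homogeneousComponent_eq_self (isHomogeneous_monomial _ ?_)
        rw [Finsupp.degree_eq_sum]
      rw [← h1, ← hc, map_sum]
      exact Finset.sum_congr rfl fun a _ => hg a
    have hmon3 : (monomial u (1 : Ω) : MvPolynomial ι Ω)
        = ∑ a, ((X a : MvPolynomial α Ω) • g a - g a * (F a - t a)) := by
      rw [hmon2]
      refine Finset.sum_congr rfl fun a _ => ?_
      rw [hsmul, aeval_X]; ring
    rw [hmon3]
    refine Submodule.sum_mem _ fun a _ => ?_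
    rcases hg' a with h0 | hlt
    · rw [h0]; simp
    have := hd a
    refine Submodule.sub_mem _ (Submodule.smul_mem _ _ (ih (g a).totalDegree (by omega) _ le_rfl))
      (ih _ ?_ _ (totalDegree_mul _ _))
    have := hFt a
    omega
  have hfin : Module.Finite (MvPolynomial α Ω) (MvPolynomial ι Ω) :=
    ⟨⟨B, (Submodule.eq_top_iff'.2 fun p => hW _ p le_rfl)⟩⟩
  have := Algebra.IsIntegral.of_finite (MvPolynomial α Ω) (MvPolynomial ι Ω)
  exact this.isIntegral

/-! ### Nonsingular pairs of quadratic forms and their linear subspaces -/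

/-- The bilinear form `∑ i j, A i j * x i * y j` with coefficients in `k`, over a `k`-algebra `R`. -/
def bf {k ι : Type} [CommRing k] [Fintype ι] (A : ι → ι → k) (R : Type) [CommRing R] [Algebra k R] :
    (ι → R) →ₗ[R] (ι → R) →ₗ[R] R :=
  LinearMap.mk₂ R (fun x y => ∑ i, ∑ j, A i j • (x i * y j))
    (fun x x' y => by simp [add_mul, Finset.sum_add_distrib])
    (fun c x y => by simp [Finset.mul_sum, mul_assoc])
    (fun x y y' => by simp [mul_add, Finset.sum_add_distrib])
    (fun c x y => by simp [Finset.mul_sum, mul_left_comm])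

section
variable {k ι : Type} [CommRing k] [Fintype ι] {R S : Type} [CommRing R] [CommRing S]
  [Algebra k R] [Algebra k S]

lemma bf_apply (A : ι → ι → k) (x y : ι → R) :
    bf A R x y = ∑ i, ∑ j, A i j • (x i * y j) := rfl

lemma map_bf (A : ι → ι → k) (f : R →ₐ[k] S) (x y : ι → R) :
    f (bf A R x y) = bf A S (fun i => f (x i)) (fun i => f (y i)) := by
  simp [bf_apply]

/-- The polar form `b(x, y) + b(y, x)`. -/
def pol (A : ι → ι → k) (R : Type) [CommRing R] [Algebra k R] : (ι → R) →ₗ[R] (ι → R) →ₗ[R] R :=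
  bf A R + (bf A R).flip

lemma pol_apply (A : ι → ι → k) (x y : ι → R) : pol A R x y = bf A R x y + bf A R y x := rfl

lemma map_pol (A : ι → ι → k) (f : R →ₐ[k] S) (x y : ι → R) :
    f (pol A R x y) = pol A S (fun i => f (x i)) (fun i => f (y i)) := by
  simp [pol_apply, map_bf]

lemma bf_add_add (A : ι → ι → k) (x y : ι → R) :
    bf A R (x + y) (x + y) = bf A R x x + pol A R x y + bf A R y y := by
  simp only [map_add, LinearMap.add_apply, pol_apply]; ring

end

/-- The forms `b j (x, x)` have no singular common zero with coordinates in `E`: at a common zero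
`v ≠ 0` no nontrivial combination of their gradients vanishes. -/
def Nonsing {k ι : Type} [CommRing k] [Fintype ι] (A : Fin 2 → ι → ι → k) (E : Type) [Field E]
    [Algebra k E] : Prop :=
  ∀ v : ι → E, (∀ j, bf (A j) E v v = 0) → ∀ c : Fin 2 → E, c ≠ 0 →
    (∀ w, ∑ j, c j * pol (A j) E v w = 0) → v = 0

/-- By the Nullstellensatz, nonsingularity over the algebraic closure implies nonsingularity over
every extension field. -/
lemma Nonsing.transfer {k ι : Type} [Field k] [Fintype ι] {A : Fin 2 → ι → ι → k}
    (h : Nonsing A (AlgebraicClosure k)) (E : Type) [Field E] [Algebra k E] : Nonsing A E := by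
  classical
  -- singular points are the zeros of the two forms and of the `2 × 2` minors of the Jacobian matrix
  let g : Fin 2 → ι → MvPolynomial ι k := fun j i => pol (A j) _ X (Pi.single i 1)
  let G : Fin 2 ⊕ ι × ι → MvPolynomial ι k := Sum.elim (fun j => bf (A j) _ X X)
    (fun i => g 0 i.1 * g 1 i.2 - g 0 i.2 * g 1 i.1)
  have hb : ∀ (K : Type) [Field K] [Algebra k K] (v : ι → K) (j : Fin 2),
      aeval v (G (Sum.inl j)) = bf (A j) K v v := by
    intro K _ _ v j
    simp [G, map_bf]
  have hg : ∀ (K : Type) [Field K] [Algebra k K] (v : ι → K) (j : Fin 2) (i : ι),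
      aeval v (g j i) = pol (A j) K v (Pi.single i 1) := by
    intro K _ _ v j i
    simp only [g, map_pol, aeval_X]
    congr 1
    ext l
    by_cases hl : l = i
    · subst hl; simp
    · simp [hl]
  have hsum : ∀ (K : Type) [Field K] [Algebra k K] (v : ι → K) (c : Fin 2 → K),
      (∀ w, ∑ j, c j * pol (A j) K v w = 0) ↔
        ∀ i, ∑ j, c j * pol (A j) K v (Pi.single i 1) = 0 := by
    intro K _ _ v c
    refine ⟨fun h i => h _, fun h w => ?_⟩
    have h2 : (∑ j, c j • pol (A j) K v) = 0 := by
      refine LinearMap.pi_ext' fun i => LinearMap.ext_ring ?_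
      simpa [LinearMap.sum_apply] using h i
    simpa [LinearMap.sum_apply] using LinearMap.congr_fun h2 w
  have hrad : ∀ i, (X i : MvPolynomial ι k) ∈ (Ideal.span (Set.range G)).radical := by
    intro i
    rw [← vanishingIdeal_zeroLocus_eq_radical (K := AlgebraicClosure k), zeroLocus_span,
      mem_vanishingIdeal_iff]
    intro v hv
    have hm : ∀ i i', pol (A 0) _ v (Pi.single i 1) * pol (A 1) _ v (Pi.single i' 1)
        - pol (A 0) _ v (Pi.single i' 1) * pol (A 1) _ v (Pi.single i 1) = 0 := by
      intro i i'
      simpa [G, hg] using hv _ ⟨Sum.inr (i, i'), rfl⟩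
    suffices v = 0 by simp [this]
    have hv0 : ∀ j, bf (A j) _ v v = 0 := fun j => by rw [← hb]; exact hv _ ⟨_, rfl⟩
    by_cases h0 : ∀ i, pol (A 0) _ v (Pi.single i 1) = 0
    · refine h v hv0 ![1, 0] (fun h => by simpa using congrFun h 0) ((hsum _ _ _).2 fun i => ?_)
      simp [h0]
    · push Not at h0
      obtain ⟨l, hl⟩ := h0
      refine h v hv0 ![pol (A 1) _ v (Pi.single l 1), - pol (A 0) _ v (Pi.single l 1)]
        (fun h => hl (by simpa using congrFun h 1)) ((hsum _ _ _).2 fun i => ?_)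
      have := hm i l
      simp only [Fin.sum_univ_two, Matrix.cons_val_zero, Matrix.cons_val_one]
      linear_combination this
  intro v hv c hc hcv
  rw [hsum] at hcv
  have hI : ∀ p ∈ Ideal.span (Set.range G), aeval v p = 0 := by
    intro p hp
    have : Ideal.span (Set.range G) ≤ RingHom.ker (aeval (R := k) v).toRingHom := by
      rw [Ideal.span_le]
      rintro _ ⟨j | ⟨i, i'⟩, rfl⟩
      · exact (hb E v j).trans (hv j)
      · change aeval v (g 0 i * g 1 i' - g 0 i' * g 1 i) = 0
        simp only [map_sub, map_mul, hg]
        have h1 := hcv i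
        have h2 := hcv i'
        rw [Fin.sum_univ_two] at h1 h2
        by_cases h0 : c 0 = 0
        · have hc1 : c 1 ≠ 0 := fun h1 => hc (by ext j; fin_cases j <;> simp [h0, h1])
          refine mul_left_cancel₀ hc1 ?_
          linear_combination pol (A 0) E v (Pi.single i 1) * h2
            - pol (A 0) E v (Pi.single i' 1) * h1
        · refine mul_left_cancel₀ h0 ?_
          linear_combination pol (A 1) E v (Pi.single i' 1) * h1
            - pol (A 1) E v (Pi.single i 1) * h2
    exact this hp
  funext i
  obtain ⟨M, hM⟩ := hrad i
  have := hI _ hM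
  rw [map_pow, aeval_X] at this
  exact eq_zero_of_pow_eq_zero this

section
variable {ι E : Type} [Field E]

/-- The map `v ↦ B(v, ·)` from a totally isotropic subspace `H` to the dual of the quotient
by `H`. -/
noncomputable def polRestrict (B : (ι → E) →ₗ[E] (ι → E) →ₗ[E] E) (H : Submodule E (ι → E))
    (hB : ∀ v ∈ H, ∀ w ∈ H, B v w = 0) : H →ₗ[E] Module.Dual E ((ι → E) ⧸ H) :=
  H.dualQuotEquivDualAnnihilator.symm.toLinearMap ∘ₗ (B.domRestrict H).codRestrict _ fun v =>
    (Submodule.mem_dualAnnihilator _).2 fun w hw => hB v v.2 w hw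

lemma polRestrict_apply (B : (ι → E) →ₗ[E] (ι → E) →ₗ[E] E) (H : Submodule E (ι → E))
    (hB : ∀ v ∈ H, ∀ w ∈ H, B v w = 0) (v : H) (w : ι → E) :
    polRestrict B H hB v (Submodule.Quotient.mk w) = B v w := by
  simp [polRestrict]
  rfl

end

section
variable {k ι : Type} [Field k] [Fintype ι] {A : Fin 2 → ι → ι → k} {E : Type} [Field E]
  [Algebra k E]

lemma finrank_dual_quotient (H : Submodule E (ι → E)) :
    Module.finrank E H + Module.finrank E (Module.Dual E ((ι → E) ⧸ H)) = Fintype.card ι := by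
  rw [Subspace.dual_finrank_eq, add_comm, H.finrank_quotient_add_finrank,
    Module.finrank_fintype_fun_eq_card]

/-- The two quadrics contain no common linear subspace `H` of codimension at most `3`. The polar
forms would induce two maps from `H` to the dual of the quotient, which has dimension at most
`3 ≤ dim H`; injectivity forces equality of dimensions, and an eigenvector of one map relative to
the other is then a singular point. -/
lemma Nonsing.finrank_add_lt [IsAlgClosed E] (h : Nonsing A E) (hn : 6 ≤ Fintype.card ι)
    (H : Submodule E (ι → E)) (hH : ∀ j, ∀ v ∈ H, bf (A j) E v v = 0) :
    Module.finrank E H + 3 < Fintype.card ι := by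
  by_contra! hlt
  have hdim := finrank_dual_quotient H
  have hpol : ∀ j, ∀ v ∈ H, ∀ w ∈ H, pol (A j) E v w = 0 := by
    intro j v hv w hw
    have := bf_add_add (A j) v w
    rw [hH j _ (H.add_mem hv hw), hH j v hv, hH j w hw] at this
    simpa using this.symm
  let φ : Fin 2 → H →ₗ[E] Module.Dual E ((ι → E) ⧸ H) := fun j => polRestrict (pol (A j) E) H (hpol j)
  have hφ : ∀ j v w, φ j v (Submodule.Quotient.mk w) = pol (A j) E v w :=
    fun j v w => polRestrict_apply _ _ _ _ _
  have hker : ∀ v : H, ∀ c : Fin 2 → E, c ≠ 0 → ∑ j, c j • φ j v = 0 → v = 0 := by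
    intro v c hc hv
    refine Subtype.ext (h v (fun j => hH j v v.2) c hc fun w => ?_)
    have := LinearMap.congr_fun hv (Submodule.Quotient.mk w)
    simpa [hφ, LinearMap.sum_apply] using this
  have hinj : Function.Injective (φ 1) := by
    rw [← LinearMap.ker_eq_bot, LinearMap.ker_eq_bot']
    intro v hv
    exact hker v ![0, 1] (fun h => by simpa using congrFun h 1) (by simp [hv])
  have hle := LinearMap.finrank_le_finrank_of_injective hinj
  let ψ : H ≃ₗ[E] Module.Dual E ((ι → E) ⧸ H) := LinearEquiv.ofInjectiveOfFinrankEq (φ 1) hinj (by omega)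
  have hψ : ∀ v, ψ v = φ 1 v := fun v => rfl
  have : Nontrivial H := Module.nontrivial_of_finrank_pos (R := E) (by omega)
  obtain ⟨c, hc⟩ := Module.End.exists_eigenvalue (ψ.symm.toLinearMap ∘ₗ φ 0)
  obtain ⟨v, hv⟩ := hc.exists_hasEigenvector
  refine hv.2 (hker v ![1, -c] (fun h => by simpa using congrFun h 0) ?_)
  have h1 : ψ.symm (φ 0 v) = c • v := hv.apply_eq_smul
  rw [LinearEquiv.symm_apply_eq, map_smul, hψ] at h1
  simp only [Fin.sum_univ_two, Matrix.cons_val_zero, Matrix.cons_val_one, one_smul, h1]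
  rw [← add_smul, add_neg_cancel, zero_smul]

/-- No member of the pencil vanishes on a linear subspace `T` of codimension at most `2`. The map
from `T` to the dual of the quotient induced by its polar form would have a kernel of dimension at
least `2`, on which the other form has a nontrivial zero: a singular point. -/
lemma Nonsing.finrank_add_lt_of_pencil [IsAlgClosed E] (h : Nonsing A E)
    (hn : 6 ≤ Fintype.card ι) (T : Submodule E (ι → E)) (c : Fin 2 → E) (hc : c ≠ 0)
    (hT : ∀ v ∈ T, ∑ j, c j * bf (A j) E v v = 0) :
    Module.finrank E T + 2 < Fintype.card ι := by
  by_contra! hlt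
  have hdim := finrank_dual_quotient T
  let B : (ι → E) →ₗ[E] (ι → E) →ₗ[E] E := ∑ j, c j • pol (A j) E
  have hBa : ∀ v w, B v w = ∑ j, c j * pol (A j) E v w := by
    intro v w; simp [B]
  have hB : ∀ v ∈ T, ∀ w ∈ T, B v w = 0 := by
    intro v hv w hw
    have h1 := hT _ (T.add_mem hv hw)
    simp only [bf_add_add, mul_add, Finset.sum_add_distrib, hT v hv, hT w hw] at h1
    rw [hBa]; simpa using h1
  let φ := polRestrict B T hB
  have hrk := LinearMap.finrank_range_add_finrank_ker φ
  have hrle := Submodule.finrank_le (LinearMap.range φ)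
  obtain ⟨x, hx⟩ : ∃ x : LinearMap.ker φ, x ≠ 0 := by
    have : Nontrivial (LinearMap.ker φ) := Module.nontrivial_of_finrank_pos (R := E) (by omega)
    exact exists_ne 0
  obtain ⟨y, hy⟩ := exists_linearIndependent_pair_of_one_lt_finrank (R := E)
    (M := LinearMap.ker φ) (by omega) hx
  obtain ⟨j, hj⟩ := Function.ne_iff.1 hc
  -- a nonzero vector of the radical on which the other form vanishes
  obtain ⟨v, hv0, hv⟩ : ∃ v : LinearMap.ker φ, v ≠ 0 ∧ bf (A (1 - j)) E v.1.1 v.1.1 = 0 := by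
    by_cases hyy : bf (A (1 - j)) E y.1.1 y.1.1 = 0
    · exact ⟨y, hy.ne_zero 1, hyy⟩
    · let P : Polynomial E := Polynomial.C (bf (A (1 - j)) E y.1.1 y.1.1) * Polynomial.X ^ 2
        + Polynomial.C (pol (A (1 - j)) E x.1.1 y.1.1) * Polynomial.X
        + Polynomial.C (bf (A (1 - j)) E x.1.1 x.1.1)
      have hP : P.degree ≠ 0 := by
        rw [show P.degree = 2 from Polynomial.degree_quadratic hyy]; decide
      obtain ⟨t, ht⟩ := IsAlgClosed.exists_root P hP
      refine ⟨x + t • y, fun h0 => ?_, ?_⟩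
      · have := LinearIndependent.pair_iff.1 hy 1 t (by simpa using h0)
        simp at this
      · have h1 : ((x + t • y).1.1 : ι → E) = x.1.1 + t • y.1.1 := rfl
        rw [h1, bf_add_add]
        simp only [map_smul, LinearMap.smul_apply, smul_eq_mul]
        simp only [P, Polynomial.IsRoot, Polynomial.eval_add, Polynomial.eval_mul,
          Polynomial.eval_C, Polynomial.eval_pow, Polynomial.eval_X] at ht
        linear_combination ht
  refine hv0 (Subtype.ext (Subtype.ext (h v.1.1 ?_ c hc fun w => ?_)))
  · have h1 := hT v.1.1 v.1.2
    have hj' : c j ≠ 0 := hj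
    intro i
    by_cases hij : i = j
    · subst hij
      have hsum : ∑ l, c l * bf (A l) E v.1.1 v.1.1 = c i * bf (A i) E v.1.1 v.1.1 := by
        refine Finset.sum_eq_single i (fun l _ hl => ?_) (by simp)
        rw [show l = 1 - i by omega, hv, mul_zero]
      rw [hsum] at h1
      exact (mul_eq_zero.1 h1).resolve_left hj'
    · rw [show i = 1 - j by omega, hv]
  · rw [← hBa, ← polRestrict_apply B T hB, LinearMap.mem_ker.1 v.2, LinearMap.zero_apply]

end

/-! ### Common zeros of coprime polynomials -/

/-- Gauss's lemma in the following form: coprime polynomials over a factorial domain have no common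
root in a field extension. -/
lemma IsRelPrime.not_common_root {R κ : Type} [CommRing R] [IsDomain R]
    [UniqueFactorizationMonoid R] [Field κ] {f : R →+* κ} (hf : Function.Injective f) {y : κ}
    {p q : Polynomial R} (h : IsRelPrime p q) (hp : p.eval₂ f y = 0) (hq : q.eval₂ f y = 0) :
    False := by
  classical
  by_cases hp0 : p = 0
  · have hu : IsUnit q := h (hp0 ▸ dvd_zero q) dvd_rfl
    exact (hu.map (Polynomial.eval₂RingHom f y)).ne_zero hq
  obtain ⟨s, hs, hsp⟩ := UniqueFactorizationMonoid.exists_prime_factors p hp0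
  obtain ⟨r, hrs, hr⟩ : ∃ r ∈ s, Polynomial.eval₂RingHom f y r = 0 := by
    have h1 : Polynomial.eval₂RingHom f y s.prod = 0 := by
      obtain ⟨u, hu⟩ := hsp.symm
      rw [← hu, map_mul, Polynomial.coe_eval₂RingHom, hp, zero_mul]
    rw [map_multiset_prod, Multiset.prod_eq_zero_iff, Multiset.mem_map] at h1
    exact h1
  have hrp : r ∣ p := (Multiset.dvd_prod hrs).trans hsp.dvd
  have hprime := hs r hrs
  have hdeg : r.natDegree ≠ 0 := by
    intro h0
    obtain ⟨c, rfl⟩ := Polynomial.natDegree_eq_zero.1 h0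
    rw [Polynomial.coe_eval₂RingHom, Polynomial.eval₂_C] at hr
    refine hprime.ne_zero ?_
    rw [(map_eq_zero_iff f hf).1 hr, map_zero]
  have hprim := hprime.irreducible.isPrimitive hdeg
  have hirr := (hprim.irreducible_iff_irreducible_map_fraction_map (K := FractionRing R)).1
    hprime.irreducible
  refine hprime.not_isUnit (h hrp ?_)
  refine hprim.dvd_of_fraction_map_dvd_fraction_map (K := FractionRing R) ?_
  by_contra hnd
  obtain ⟨a, b, hab⟩ := hirr.coprime_iff_not_dvd.2 hnd
  have h1 := congrArg (Polynomial.eval₂RingHom (IsFractionRing.lift (K := FractionRing R) hf) y) hab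
  have hcomp : (IsFractionRing.lift (K := FractionRing R) hf).comp (algebraMap R (FractionRing R))
      = f := RingHom.ext fun c => IsFractionRing.lift_algebraMap hf c
  simp only [map_add, map_mul, map_one, Polynomial.coe_eval₂RingHom, Polynomial.eval₂_map,
    hcomp, hq] at h1 hr
  simp [hr] at h1

/-- A finite family contains an algebraically independent subfamily over which it is algebraic. -/
lemma exists_indep_subset (F : Type) {κ τ : Type} [Field F] [Field κ] [Algebra F κ] [Finite τ]
    (z : τ → κ) : ∃ s : Set τ, AlgebraicIndepOn F z s ∧
      ∀ i, IsAlgebraic (IntermediateField.adjoin F (z '' s)) (z i) := by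
  obtain ⟨s, hs⟩ := Set.Finite.exists_maximal (s := {s : Set τ | AlgebraicIndepOn F z s})
    (Set.toFinite _) ⟨∅, by
      have : IsEmpty ((∅ : Set τ) : Type) := Set.isEmpty_coe_sort.2 rfl
      exact algebraicIndependent_empty_type⟩
  have hsi : AlgebraicIndepOn F z s := hs.1
  refine ⟨s, hsi, fun i => ?_⟩
  by_contra hna
  have htr : Transcendental (Algebra.adjoin F (z '' s)) (z i) := fun halg =>
    hna (halg.tower_top_of_subalgebra_le (IntermediateField.algebra_adjoin_le_adjoin F (z '' s)))
  have his : i ∈ s := hs.2 (hsi.insert htr) (Set.subset_insert _ _) (Set.mem_insert _ _)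
  exact hna (isAlgebraic_algebraMap (⟨z i, IntermediateField.subset_adjoin _ _ ⟨i, his, rfl⟩⟩ :
      IntermediateField.adjoin F (z '' s)))

/-- A common zero of two coprime polynomials in `τ` variables generates an extension of
transcendence degree at most `card τ - 2`. -/
lemma IsRelPrime.exists_finset {F κ τ : Type} [Field F] [Field κ] [Algebra F κ] [Fintype τ]
    [Nonempty τ] {p q : MvPolynomial τ F} (h : IsRelPrime p q) (z : τ → κ)
    (hp : aeval z p = 0) (hq : aeval z q = 0) :
    ∃ T : Finset κ, T.card + 2 ≤ Fintype.card τ ∧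
      ∀ i, IsAlgebraic (IntermediateField.adjoin F (T : Set κ)) (z i) := by
  classical
  obtain ⟨s, hsi, hs⟩ := exists_indep_subset F z
  by_cases hcard : s.toFinset.card + 2 ≤ Fintype.card τ
  · refine ⟨s.toFinset.image z, le_trans (by gcongr; exact Finset.card_image_le) hcard, ?_⟩
    rwa [show ((s.toFinset.image z : Finset κ) : Set κ) = z '' s by simp]
  exfalso
  obtain ⟨i₀, hi₀⟩ : ∃ i₀, ∀ i, i ≠ i₀ → i ∈ s := by
    have hc : (s.toFinset)ᶜ.card ≤ 1 := by
      rw [Finset.card_compl]; omega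
    rw [Finset.card_le_one_iff_subset_singleton] at hc
    obtain ⟨i₀, hi₀⟩ := hc
    refine ⟨i₀, fun i hi => ?_⟩
    by_contra his
    exact hi (by simpa using hi₀ (show i ∈ (s.toFinset)ᶜ by simpa using his))
  let z' : {i // i ≠ i₀} → κ := fun i => z i
  have hz' : AlgebraicIndependent F z' :=
    hsi.comp (fun i : {i // i ≠ i₀} => (⟨i.1, hi₀ i.1 i.2⟩ : s))
      (fun a b hab => Subtype.ext (by simpa using hab))
  let Φ : MvPolynomial τ F ≃ₐ[F] Polynomial (MvPolynomial {i // i ≠ i₀} F) :=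
    (renameEquiv F (Equiv.optionSubtypeNe i₀).symm).trans (optionEquivLeft F _)
  have hΦ : ∀ p, (Φ p).eval₂ (aeval z').toRingHom (z i₀) = aeval z p := by
    intro p
    have : (Polynomial.eval₂RingHom (aeval z').toRingHom (z i₀)).comp Φ.toRingEquiv.toRingHom
        = (aeval z).toRingHom := by
      refine MvPolynomial.ringHom_ext (fun r => ?_) (fun i => ?_)
      · simp [Φ, optionEquivLeft_C]
      · by_cases hi : i = i₀
        · subst hi; simp [Φ, optionEquivLeft_X_none]
        · simp [Φ, Equiv.optionSubtypeNe_symm_of_ne hi, optionEquivLeft_X_some, z']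
    exact RingHom.congr_fun this p
  have hrel : IsRelPrime (Φ p) (Φ q) := fun d hdp hdq => by
    have h1 := h (d := Φ.symm d) (by simpa using map_dvd Φ.symm hdp)
      (by simpa using map_dvd Φ.symm hdq)
    simpa using h1.map Φ
  have hinj : Function.Injective (aeval (R := F) z').toRingHom := hz'
  exact hrel.not_common_root hinj (y := z i₀) (by rw [hΦ, hp]) (by rw [hΦ, hq])

/-! ### Coprimality of the two forms on subspaces of small codimension -/

/-- A polynomial of degree at most `1` is an affine function. -/
lemma exists_eval_eq_add_of_totalDegree_le_one {τ E : Type} [Field E] (p : MvPolynomial τ E)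
    (hp : p.totalDegree ≤ 1) : ∃ (c : E) (l : (τ → E) →ₗ[E] E), ∀ z, eval z p = c + l z := by
  have h1 : ∃ l : (τ → E) →ₗ[E] E, ∀ z, eval z (homogeneousComponent 1 p) = l z := by
    have hm : homogeneousComponent 1 p ∈ homogeneousSubmodule τ E 1 := homogeneousComponent_mem 1 p
    rw [homogeneousSubmodule_one_eq_span_X] at hm
    generalize homogeneousComponent 1 p = g at hm ⊢
    induction hm using Submodule.span_induction with
    | mem x hx =>
      obtain ⟨i, rfl⟩ := hx
      exact ⟨LinearMap.proj i, fun z => by simp⟩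
    | zero => exact ⟨0, fun z => by simp⟩
    | add x y _ _ hx hy =>
      obtain ⟨l, hl⟩ := hx
      obtain ⟨m, hm⟩ := hy
      exact ⟨l + m, fun z => by simp [hl, hm]⟩
    | smul a x _ hx =>
      obtain ⟨l, hl⟩ := hx
      exact ⟨a • l, fun z => by simp [hl]⟩
  obtain ⟨l, hl⟩ := h1
  have h2 : p = homogeneousComponent 0 p + homogeneousComponent 1 p := by
    conv_lhs => rw [← sum_homogeneousComponent p]
    have h3 : homogeneousComponent 0 p + homogeneousComponent 1 p =
        ∑ i ∈ Finset.range 2, homogeneousComponent i p := by simp [Finset.sum_range_succ]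
    rw [h3]
    refine Finset.sum_subset (by simpa using hp) fun i _ hi => ?_
    exact homogeneousComponent_eq_zero _ _ (by simpa using hi)
  refine ⟨coeff 0 p, l, fun z => ?_⟩
  conv_lhs => rw [h2]
  simp [hl, homogeneousComponent_zero]

section
variable {k ι τ : Type} [Field k] [Fintype ι] [Fintype τ] {A : Fin 2 → ι → ι → k}
  {E : Type} [Field E] [Algebra k E]

/-- The linear map with matrix `M`, over an extension ring. -/
def lin (M : ι → τ → E) (R : Type) [CommRing R] [Algebra E R] (z : τ → R) (i : ι) : R :=
  ∑ t, M i t • z t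

lemma eval_bf_lin (B : ι → ι → k) (M : ι → τ → E) (R : Type) [CommRing R] [Algebra E R]
    [Algebra k R] [IsScalarTower k E R] (z : τ → R) :
    aeval z (bf B (MvPolynomial τ E) (lin M _ X) (lin M _ X)) = bf B R (lin M R z) (lin M R z) := by
  have h := map_bf B ((aeval (R := E) z).restrictScalars k) (lin M _ X) (lin M _ X)
  have h2 : (fun i => (aeval (R := E) z).restrictScalars k (lin M _ X i)) = lin M R z := by
    ext i; simp [lin]
  rwa [h2] at h

lemma totalDegree_bf_le (B : ι → ι → k) (M : ι → τ → E) :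
    (bf B (MvPolynomial τ E) (lin M _ X) (lin M _ X)).totalDegree ≤ 2 := by
  have h1 : ∀ i, (lin M (MvPolynomial τ E) X i).totalDegree ≤ 1 := fun i => by
    refine totalDegree_finsetSum_le fun t _ => (totalDegree_smul_le _ _).trans (by simp)
  rw [bf_apply]
  refine totalDegree_finsetSum_le fun i _ => totalDegree_finsetSum_le fun j _ =>
    (totalDegree_smul_le _ _).trans ((totalDegree_mul _ _).trans ?_)
  have := h1 i
  have := h1 j
  omega

/-- The restrictions of the two forms to a linear subspace of codimension at most `2` are coprime: a
common linear factor would give a common linear subspace of codimension at most `3`, and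
proportional restrictions would give a member of the pencil vanishing on the subspace. -/
lemma Nonsing.isRelPrime [IsAlgClosed E] (h : Nonsing A E) (hn : 6 ≤ Fintype.card ι)
    (M : ι → τ → E) (hM : ∀ z, lin M E z = 0 → z = 0) (hτ : Fintype.card ι ≤ Fintype.card τ + 2) :
    IsRelPrime (bf (A 0) (MvPolynomial τ E) (lin M _ X) (lin M _ X))
      (bf (A 1) (MvPolynomial τ E) (lin M _ X) (lin M _ X)) := by
  classical
  let P : (τ → E) →ₗ[E] (ι → E) :=
    { toFun := lin M E
      map_add' := fun x y => by ext i; simp [lin, mul_add, Finset.sum_add_distrib]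
      map_smul' := fun c x => by ext i; simp [lin, Finset.mul_sum, mul_left_comm] }
  have hP : Function.Injective P := by
    rw [← LinearMap.ker_eq_bot, LinearMap.ker_eq_bot']
    exact hM
  have hPf : ∀ H : Submodule E (τ → E), Module.finrank E (H.map P) = Module.finrank E H :=
    fun H => (LinearEquiv.finrank_eq (Submodule.equivMapOfInjective P hP H)).symm
  set Q : Fin 2 → MvPolynomial τ E := fun j => bf (A j) (MvPolynomial τ E) (lin M _ X) (lin M _ X)
    with hQ
  have hev : ∀ j z, eval z (Q j) = bf (A j) E (P z) (P z) := fun j z => by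
    rw [← coe_aeval_eq_eval]; exact eval_bf_lin (A j) M E z
  have hpencil : ∀ c : Fin 2 → E, c ≠ 0 → C (c 0) * Q 0 + C (c 1) * Q 1 ≠ 0 := by
    intro c hc h0
    have h1 := h.finrank_add_lt_of_pencil hn (Submodule.map P ⊤) c hc (by
      rintro _ ⟨z, -, rfl⟩
      have := congrArg (eval z) h0
      simpa [hev, Fin.sum_univ_two] using this)
    rw [hPf, finrank_top, Module.finrank_fintype_fun_eq_card] at h1
    omega
  intro d hd0 hd1
  have hd : ∀ j, d ∣ Q j := fun j => by fin_cases j <;> assumption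
  choose u hu using hd
  have hQ0 : ∀ j, Q j ≠ 0 := by
    intro j hj
    fin_cases j
    · exact hpencil ![1, 0] (fun h => by simpa using congrFun h 0) (by simpa using hj)
    · exact hpencil ![0, 1] (fun h => by simpa using congrFun h 1) (by simpa using hj)
  have hd0 : d ≠ 0 := fun h0 => hQ0 0 (by rw [hu, h0, zero_mul])
  have hu0 : ∀ j, u j ≠ 0 := fun j h0 => hQ0 j (by rw [hu, h0, mul_zero])
  have hdeg : ∀ j, d.totalDegree + (u j).totalDegree ≤ 2 := fun j => by
    rw [← totalDegree_mul_of_isDomain hd0 (hu0 j), ← hu]; exact totalDegree_bf_le _ _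
  have hcases : d.totalDegree = 0 ∨ (d.totalDegree ≤ 1 ∧ ∀ j, (u j).totalDegree ≤ 1) ∨
      ∀ j, (u j).totalDegree = 0 := by
    have h0 := hdeg 0
    have h1 := hdeg 1
    simp only [Fin.forall_fin_two]
    omega
  -- the common factor is constant, affine with affine cofactors, or has constant cofactors
  rcases hcases with h0 | ⟨h1, h1'⟩ | h2
  · rw [totalDegree_eq_zero_iff_eq_C] at h0
    rw [h0]
    refine (IsUnit.mk0 _ fun hc => hd0 ?_).map C
    rw [h0, hc, map_zero]
  · exfalso
    obtain ⟨c, l, hl⟩ := exists_eval_eq_add_of_totalDegree_le_one d h1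
    choose a m ham using fun j => exists_eval_eq_add_of_totalDegree_le_one (u j) (h1' j)
    have hfin := h.finrank_add_lt hn ((LinearMap.ker l).map P) (by
      rintro j _ ⟨z, hz, rfl⟩
      have hz : l z = 0 := hz
      have key : ∀ t : E, t ^ 2 * bf (A j) E (P z) (P z) = c * (a j + t * m j z) := by
        intro t
        have h3 := congrArg (eval (t • z)) (hu j)
        rw [hev, map_mul, hl, ham] at h3
        simp only [map_smul, LinearMap.smul_apply, smul_eq_mul, hz] at h3
        linear_combination h3
      obtain ⟨t, ht⟩ := Infinite.exists_notMem_finset ({0, 1} : Finset E)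
      simp only [Finset.mem_insert, Finset.mem_singleton, not_or] at ht
      have k0 := key 0
      have k1 := key 1
      have k2 := key t
      have : (t * (t - 1)) * bf (A j) E (P z) (P z) = 0 := by
        linear_combination k2 - t * k1 + (t - 1) * k0
      exact (mul_eq_zero.1 this).resolve_left (mul_ne_zero ht.1 (sub_ne_zero.2 ht.2)))
    rw [hPf] at hfin
    have h4 := LinearMap.finrank_range_add_finrank_ker l
    have h5 := Submodule.finrank_le (LinearMap.range l)
    rw [Module.finrank_fintype_fun_eq_card] at h4
    rw [Module.finrank_self] at h5
    omega
  · exfalso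
    have h3 : ∀ j, ∃ a, u j = C a := fun j => ⟨_, totalDegree_eq_zero_iff_eq_C.1 (h2 j)⟩
    choose a ha using h3
    refine hpencil ![a 1, - a 0] (fun h => hu0 1 ?_) ?_
    · rw [ha, show a 1 = 0 by simpa using congrFun h 0, map_zero]
    · simp only [Matrix.cons_val_zero, Matrix.cons_val_one, hu, ha, map_neg]
      ring

end

/-! ### Transcendence degrees of points and of tangent points -/

section
variable {k ι : Type} [Field k] [Fintype ι] {A : Fin 2 → ι → ι → k}
  {E κ : Type} [Field E] [Field κ] [Algebra k E] [Algebra E κ] [Algebra k κ] [IsScalarTower k E κ]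

/-- A common zero on a linear subspace of dimension `card τ`, parametrised by the matrix `M`, lies in
an extension of transcendence degree at most `card τ - 2`. -/
lemma Nonsing.exists_finset_lin [IsAlgClosed E] {τ : Type} [Fintype τ]
    (h : Nonsing A E) (hn : 6 ≤ Fintype.card ι)
    (M : ι → τ → E) (hM : ∀ z, lin M E z = 0 → z = 0) (hτ : Fintype.card ι ≤ Fintype.card τ + 2)
    (z : τ → κ) (hz : ∀ j, bf (A j) κ (lin M κ z) (lin M κ z) = 0) :
    ∃ T : Finset κ, T.card + 2 ≤ Fintype.card τ ∧
      ∀ i, IsAlgebraic (IntermediateField.adjoin E (T : Set κ)) (lin M κ z i) := by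
  have : Nonempty τ := Fintype.card_pos_iff.1 (by omega)
  obtain ⟨T, hT, hTz⟩ := (h.isRelPrime hn M hM hτ).exists_finset z
    ((eval_bf_lin (A 0) M κ z).trans (hz 0)) ((eval_bf_lin (A 1) M κ z).trans (hz 1))
  refine ⟨T, hT, fun i => ?_⟩
  rw [← mem_algebraicClosure_iff]
  refine sum_mem fun t _ => ?_
  rw [Algebra.smul_def]
  refine mul_mem ?_ (mem_algebraicClosure_iff.2 (hTz t))
  rw [mem_algebraicClosure_iff]
  exact isAlgebraic_algebraMap (algebraMap E (IntermediateField.adjoin E (T : Set κ)) (M i t))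

/-- A point of the complete intersection lies in an extension of transcendence degree at most
`card ι - 2`. -/
lemma Nonsing.exists_finset [IsAlgClosed E] (h : Nonsing A E) (hn : 6 ≤ Fintype.card ι)
    (y : ι → κ) (hy : ∀ j, bf (A j) κ y y = 0) :
    ∃ T : Finset κ, T.card + 2 ≤ Fintype.card ι ∧
      ∀ i, IsAlgebraic (IntermediateField.adjoin E (T : Set κ)) (y i) := by
  classical
  have hl : ∀ (R : Type) [CommRing R] [Algebra E R] (z : ι → R),
      lin (fun i => Pi.single i (1 : E)) R z = z := by
    intro R _ _ z
    ext i
    simp [lin, Pi.single_apply]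
  have := h.exists_finset_lin hn (fun i => Pi.single i (1 : E)) (fun z hz => by rwa [hl] at hz)
    (by omega) y (by simpa only [hl] using hy)
  simpa only [hl] using this

/-- A point of the complete intersection lying on the tangent space at a nonzero point `x` lies
in an extension of transcendence degree at most `card ι - 4` of a field of definition of `x`. -/
lemma Nonsing.exists_finset_tangent [IsAlgClosed E] (h : Nonsing A E) (hn : 6 ≤ Fintype.card ι)
    (x : ι → E) (hx0 : x ≠ 0) (hx : ∀ j, bf (A j) E x x = 0)
    (y : ι → κ) (hxy : ∀ j, pol (A j) κ (fun i => algebraMap E κ (x i)) y = 0)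
    (hy : ∀ j, bf (A j) κ y y = 0) :
    ∃ T : Finset κ, T.card + 4 ≤ Fintype.card ι ∧
      ∀ i, IsAlgebraic (IntermediateField.adjoin E (T : Set κ)) (y i) := by
  classical
  -- the gradients at `x` are independent, so that the tangent space `ker L` has codimension `2`
  let L : (ι → E) →ₗ[E] (Fin 2 → E) := LinearMap.pi fun j => pol (A j) E x
  have hL : Function.Surjective L := by
    rw [← LinearMap.range_eq_top]
    by_contra hne
    obtain ⟨f, hf0, hf⟩ := Submodule.exists_le_ker_of_lt_top _ (lt_top_iff_ne_top.2 hne)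
    have hfs : ∀ w, f w = ∑ j, f (Pi.single j 1) * w j := by
      intro w
      conv_lhs => rw [← Finset.univ_sum_single w]
      rw [map_sum]
      refine Finset.sum_congr rfl fun j _ => ?_
      rw [mul_comm, ← smul_eq_mul, ← map_smul]
      congr 1
      ext l
      simp [Pi.single_apply]
    refine hx0 (h x hx (fun j => f (Pi.single j 1)) (fun hc => hf0 ?_) fun w => ?_)
    · ext w
      simpa using congrFun hc w
    · exact (hfs (L w)).symm.trans (hf ⟨w, rfl⟩)
  obtain ⟨S, hS⟩ := L.exists_rightInverse_of_surjective (LinearMap.range_eq_top.2 hL)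
  have hS' : ∀ w, L (S w) = w := fun w => LinearMap.congr_fun hS w
  have hrk : Module.finrank E (LinearMap.ker L) = Fintype.card ι - 2 := by
    have := LinearMap.finrank_range_add_finrank_ker L
    rw [LinearMap.range_eq_top.2 hL, finrank_top, Module.finrank_fintype_fun_eq_card,
      Module.finrank_fintype_fun_eq_card, Fintype.card_fin] at this
    omega
  -- `P` parametrises the tangent space and `R` recovers the parameters; both extend to `κ` as matrices
  let b := Module.finBasisOfFinrankEq E (LinearMap.ker L) hrk
  let P : (Fin (Fintype.card ι - 2) → E) →ₗ[E] (ι → E) :=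
    (LinearMap.ker L).subtype ∘ₗ b.equivFun.symm.toLinearMap
  let R : (ι → E) →ₗ[E] (Fin (Fintype.card ι - 2) → E) :=
    b.equivFun.toLinearMap ∘ₗ (LinearMap.id - S ∘ₗ L).codRestrict (LinearMap.ker L)
      (fun w => by simp [hS'])
  have hPR : P ∘ₗ R + S ∘ₗ L = LinearMap.id := by
    refine LinearMap.ext fun w => ?_
    change ((b.equivFun.symm (b.equivFun _) : LinearMap.ker L) : ι → E) + S (L w) = w
    rw [LinearEquiv.symm_apply_apply]
    simp
  have hmat : LinearMap.toMatrix' P * LinearMap.toMatrix' R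
      + LinearMap.toMatrix' S * LinearMap.toMatrix' L = 1 := by
    rw [← LinearMap.toMatrix'_comp, ← LinearMap.toMatrix'_comp, ← map_add, hPR,
      LinearMap.toMatrix'_id]
  let φ := algebraMap E κ
  have hmatκ := congrArg (fun N => (N.map φ).mulVec y) hmat
  have hL0 : ((LinearMap.toMatrix' L).map φ).mulVec y = 0 := by
    ext j
    rw [Pi.zero_apply, ← hxy j]
    conv_rhs => rw [← Finset.univ_sum_single y]
    rw [map_sum]
    refine Finset.sum_congr rfl fun i _ => ?_
    have h1 : (Pi.single i (y i) : ι → κ) = y i • fun l => φ ((Pi.single i 1 : ι → E) l) := by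
      ext l
      by_cases hl : l = i
      · subst hl; simp
      · simp [hl]
    have h2 := map_pol (A j) (IsScalarTower.toAlgHom k E κ) x (Pi.single i 1)
    rw [h1, map_smul, smul_eq_mul, mul_comm]
    congr 1
  have hlin : ∀ z, lin (LinearMap.toMatrix' P) κ z = ((LinearMap.toMatrix' P).map φ).mulVec z := by
    intro z
    ext i
    simp [lin, Matrix.mulVec, dotProduct, Algebra.smul_def, φ]
  have hyz : y = lin (LinearMap.toMatrix' P) κ (((LinearMap.toMatrix' R).map φ).mulVec y) := by
    rw [hlin]
    simp only [Matrix.map_add _ (map_add φ), Matrix.map_mul, Matrix.add_mulVec,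
      ← Matrix.mulVec_mulVec, hL0, Matrix.mulVec_zero, add_zero] at hmatκ
    rw [hmatκ, Matrix.map_one _ (map_zero φ) (map_one φ), Matrix.one_mulVec]
  have hPl : ∀ z, lin (LinearMap.toMatrix' P) E z = P z := by
    intro z
    rw [← LinearMap.toMatrix'_mulVec P z]
    rfl
  obtain ⟨T, hT, hTy⟩ := h.exists_finset_lin hn (LinearMap.toMatrix' P) (fun z hz => by
      rw [hPl] at hz
      exact (b.equivFun.symm.map_eq_zero_iff).1 (Subtype.ext hz)) (by simp; omega) (((LinearMap.toMatrix' R).map φ).mulVec y)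
      (by rwa [← hyz])
  rw [← hyz] at hTy
  rw [Fintype.card_fin] at hT
  exact ⟨T, by omega, hTy⟩

end

/-! ### Tangency chains -/

section
variable (k : Type) {κ : Type} [Field k] [Field κ] [Algebra k κ]

/-- The algebraic closure in `κ` of the field generated by `T` over `k`. -/
noncomputable def acl (T : Set κ) : IntermediateField k κ :=
  (algebraicClosure (IntermediateField.adjoin k T) κ).restrictScalars k

variable {k}

lemma mem_acl {T : Set κ} {x : κ} : x ∈ acl k T ↔ IsAlgebraic (IntermediateField.adjoin k T) x :=
  mem_algebraicClosure_iff

lemma subset_acl (T : Set κ) : T ⊆ acl k T := fun x hx =>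
  mem_acl.2 (isAlgebraic_algebraMap (⟨x, IntermediateField.subset_adjoin _ _ hx⟩ :
    IntermediateField.adjoin k T))

lemma mem_acl_of_isAlgebraic {T : Set κ} {x : κ} (hx : IsAlgebraic (acl k T) x) : x ∈ acl k T := by
  rw [mem_acl]
  change IsAlgebraic (algebraicClosure (IntermediateField.adjoin k T) κ) x at hx
  exact hx.restrictScalars _

instance [IsAlgClosed κ] (T : Set κ) : IsAlgClosed (acl k T) :=
  (algebraicClosure.isAlgClosure (IntermediateField.adjoin k T) κ).isAlgClosed

lemma acl_mono {S T : Set κ} (h : S ⊆ T) : acl k S ≤ acl k T := fun x hx => by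
  rw [mem_acl] at hx ⊢
  exact hx.tower_top_of_subalgebra_le (A := (IntermediateField.adjoin k S).toSubalgebra)
    (B := (IntermediateField.adjoin k T).toSubalgebra) (IntermediateField.adjoin.mono k S T h)

lemma mem_acl_union {S T : Set κ} {x : κ}
    (hx : IsAlgebraic (IntermediateField.adjoin (acl k S) T) x) : x ∈ acl k (S ∪ T) := by
  apply mem_acl_of_isAlgebraic
  let K : IntermediateField k κ := (IntermediateField.adjoin (acl k S) T).restrictScalars k
  have hK : K ≤ acl k (S ∪ T) := by
    let G : IntermediateField (acl k S) κ := IntermediateField.extendScalars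
      (acl_mono (k := k) (Set.subset_union_left : S ⊆ S ∪ T))
    have hG : IntermediateField.adjoin (acl k S) T ≤ G :=
      IntermediateField.adjoin_le_iff.2 fun t ht => subset_acl (S ∪ T) (Or.inr ht)
    exact fun t ht => hG ht
  change IsAlgebraic K x at hx
  exact hx.tower_top_of_subalgebra_le (A := K.toSubalgebra)
    (B := (acl k (S ∪ T)).toSubalgebra) hK

end

/-- Successive tangency conditions bound the transcendence degree: each nonzero member of a
tangency chain following a nonzero one contributes at most `card ι - 4`. -/
lemma Nonsing.chain {k ι κ : Type} [Field k] [Fintype ι] {A : Fin 2 → ι → ι → k} [Field κ]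
    [Algebra k κ] [IsAlgClosed κ] (h : Nonsing A (AlgebraicClosure k)) (hn : 6 ≤ Fintype.card ι)
    (y : ℕ → ι → κ) (hy : ∀ m j, bf (A j) κ (y m) (y m) = 0)
    (hyy : ∀ m j, pol (A j) κ (y m) (y (m + 1)) = 0) (e : ℕ) :
    ∃ T : Finset κ, T.card ≤ e * (Fintype.card ι - 4) + (Fintype.card ι - 2) ∧
      ∀ m ≤ e, ∀ i, y m i ∈ acl k (T : Set κ) := by
  classical
  obtain ⟨N, hN⟩ : ∃ N, Fintype.card ι = N + 6 := ⟨_, (Nat.sub_add_cancel hn).symm⟩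
  suffices ∃ T : Finset κ, T.card ≤ e * (N + 2) + (if y e = 0 then 2 else N + 4) ∧
      ∀ m ≤ e, ∀ i, y m i ∈ acl k (T : Set κ) by
    obtain ⟨T, hT, hT'⟩ := this
    refine ⟨T, hT.trans ?_, hT'⟩
    rw [hN, show N + 6 - 4 = N + 2 by omega, show N + 6 - 2 = N + 4 by omega]
    split_ifs <;> omega
  -- adjoining one more point of the complete intersection
  have key : ∀ (S : Finset κ) m, ∃ T : Finset κ, T.card ≤ S.card + (N + 4) ∧ S ⊆ T ∧
      ∀ i, y m i ∈ acl k (T : Set κ) := by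
    intro S m
    obtain ⟨T, hT, hTy⟩ := (h.transfer (acl k (S : Set κ))).exists_finset hn (y m) (hy m)
    refine ⟨S ∪ T, (Finset.card_union_le _ _).trans (by omega), Finset.subset_union_left,
      fun i => ?_⟩
    rw [Finset.coe_union]
    exact mem_acl_union (hTy i)
  induction e with
  | zero =>
    by_cases h0 : y 0 = 0
    · refine ⟨∅, by simp, fun m hm i => ?_⟩
      rw [Nat.le_zero.1 hm, h0]
      exact zero_mem _
    · obtain ⟨T, hT, -, hTy⟩ := key ∅ 0
      refine ⟨T, by simpa [h0] using hT, fun m hm i => ?_⟩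
      rw [Nat.le_zero.1 hm]
      exact hTy i
  | succ e ih =>
    obtain ⟨S, hS, hSy⟩ := ih
    by_cases h1 : y (e + 1) = 0
    · refine ⟨S, hS.trans ?_, fun m hm i => ?_⟩
      · rw [if_pos h1, add_mul]
        split_ifs <;> omega
      · rcases Nat.le_succ_iff.1 hm with hm | rfl
        · exact hSy m hm i
        · rw [Nat.succ_eq_add_one, h1]
          exact zero_mem _
    suffices ∃ T : Finset κ, T.card ≤ (e + 1) * (N + 2) + (N + 4) ∧ S ⊆ T ∧
        ∀ i, y (e + 1) i ∈ acl k (T : Set κ) by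
      obtain ⟨T, hT, hST, hTy⟩ := this
      refine ⟨T, by rwa [if_neg h1], fun m hm i => ?_⟩
      rcases Nat.le_succ_iff.1 hm with hm | rfl
      · exact acl_mono (by exact_mod_cast hST) (hSy m hm i)
      · exact hTy i
    by_cases h0 : y e = 0
    · obtain ⟨T, hT, hST, hTy⟩ := key S (e + 1)
      refine ⟨T, hT.trans ?_, hST, hTy⟩
      rw [if_pos h0] at hS
      rw [add_mul]
      omega
    · rw [if_neg h0] at hS
      let x : ι → acl k (S : Set κ) := fun i => ⟨y e i, hSy e le_rfl i⟩
      have hx : ∀ j, bf (A j) (acl k (S : Set κ)) x x = 0 := fun j => by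
        have := map_bf (A j) (acl k (S : Set κ)).val x x
        rw [show (fun i => (acl k (S : Set κ)).val (x i)) = y e from rfl, hy] at this
        exact Subtype.ext this
      obtain ⟨T, hT, hTy⟩ := (h.transfer (acl k (S : Set κ))).exists_finset_tangent hn x
        (fun hx0 => h0 (funext fun i => congrArg Subtype.val (congrFun hx0 i))) hx (y (e + 1))
        (hyy e) (hy (e + 1))
      refine ⟨S ∪ T, (Finset.card_union_le _ _).trans ?_, Finset.subset_union_left, fun i => ?_⟩
      · rw [add_mul]
        omega
      · rw [Finset.coe_union]
        exact mem_acl_union (hTy i)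

/-! ### Generic linear forms -/

section
variable {k κ : Type} [Field k] [Field κ] [Algebra k κ]

open scoped IntermediateField.algebraAdjoinAdjoin in
/-- An algebraically independent family is no larger than any set over which it is algebraic. -/
lemma card_le_of_forall_mem_acl {τ : Type} [Fintype τ] {u : τ → κ} (hu : AlgebraicIndependent k u)
    (V : Finset κ) (hV : ∀ t, u t ∈ acl k (V : Set κ)) : Fintype.card τ ≤ V.card := by
  let M := AlgebraicIndependent.matroid k κ
  have hI : M.Indep (Set.range u) :=
    AlgebraicIndependent.matroid_indep_iff.2 hu.to_subtype_range
  have hsub : Set.range u ⊆ M.closure (V : Set κ) := by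
    rintro _ ⟨t, rfl⟩
    rw [AlgebraicIndependent.matroid_closure_eq, SetLike.mem_coe, Subalgebra.mem_algebraicClosure]
    exact (IsFractionRing.isAlgebraic_iff (Algebra.adjoin k (V : Set κ))
      (IntermediateField.adjoin k (V : Set κ)) κ).2 (mem_acl.1 (hV t))
  have h1 := (hI.encard_le_eRk_of_subset hsub).trans
    ((M.eRk_closure_eq _).le.trans (M.eRk_le_encard _))
  have h2 : (Set.range u).encard = Fintype.card τ := by
    rw [← Set.image_univ, hu.injective.encard_image, Set.encard_univ, ENat.card_eq_coe_fintype_card]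
  rw [h2, Set.encard_coe_eq_coe_finsetCard] at h1
  exact_mod_cast h1

/-- `d` generic linear forms have no common zero `z ≠ 0` whose generic multiple lies in an extension
of transcendence degree at most `d`. Normalising `z i₀ = 1`, the relations express each coefficient
`u (some (j, i₀))` through `z` and the other coefficients, so the `1 + d * card τ` independent
elements `u` would be algebraic over `d * card τ` elements. -/
lemma generic_forms_no_zero {τ : Type} [Fintype τ] {d : ℕ} (u : Option (Fin d × τ) → κ)
    (hu : AlgebraicIndependent k u) (z : τ → κ) (i₀ : τ) (hz : z i₀ = 1)
    (huz : ∀ j, ∑ i, u (some (j, i)) * z i = 0) (T : Finset κ) (hT : T.card ≤ d)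
    (hzT : ∀ i, u none * z i ∈ acl k (T : Set κ)) : False := by
  classical
  let V : Finset κ := T ∪ (Finset.univ ×ˢ Finset.univ.erase i₀).image fun ji => u (some ji)
  have hVcard : V.card ≤ d * Fintype.card τ := by
    have hc := Fintype.card_pos_iff.2 ⟨i₀⟩
    have h1 : ((Finset.univ ×ˢ Finset.univ.erase i₀).image fun ji => u (some ji)).card
        ≤ d * (Fintype.card τ - 1) := by
      refine Finset.card_image_le.trans ?_
      rw [Finset.card_product, Finset.card_erase_of_mem (Finset.mem_univ _)]
      simp
    obtain ⟨N, hN⟩ := Nat.exists_eq_succ_of_ne_zero hc.ne'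
    rw [hN, Nat.succ_sub_one] at h1
    rw [hN]
    calc V.card ≤ T.card + _ := Finset.card_union_le _ _
      _ ≤ d + d * N := add_le_add hT h1
      _ = d * N.succ := by rw [Nat.mul_succ, add_comm]
  have hTV : ∀ i, u none * z i ∈ acl k (V : Set κ) := fun i =>
    acl_mono (by simp [V]) (hzT i)
  have hnone : u none ∈ acl k (V : Set κ) := by simpa [hz] using hTV i₀
  have hu0 : u none ≠ 0 := hu.ne_zero _
  have hzV : ∀ i, z i ∈ acl k (V : Set κ) := fun i => by
    have := div_mem (hTV i) hnone
    rwa [mul_div_cancel_left₀ _ hu0] at this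
  have hmem : ∀ j, ∀ i ≠ i₀, u (some (j, i)) ∈ acl k (V : Set κ) := fun j i hi =>
    subset_acl _ (by
      simp only [V, Finset.coe_union, Finset.coe_image]
      exact Or.inr ⟨(j, i), by simpa using hi, rfl⟩)
  have hall : ∀ t, u t ∈ acl k (V : Set κ) := by
    rintro (_ | ⟨j, i⟩)
    · exact hnone
    · by_cases hi : i = i₀
      · subst hi
        have h1 := huz j
        rw [← Finset.add_sum_erase _ _ (Finset.mem_univ i), hz, mul_one] at h1
        rw [eq_neg_of_add_eq_zero_left h1]
        exact neg_mem (sum_mem fun l hl => mul_mem (hmem j l (Finset.ne_of_mem_erase hl)) (hzV l))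
      · exact hmem j i hi
  have := card_le_of_forall_mem_acl hu V hall
  simp only [Fintype.card_option, Fintype.card_prod, Fintype.card_fin] at this
  omega

end

/-! ### Degeneration of the coefficient equations -/

/-- Extension by zero of a family of vectors indexed by `0, …, e`. -/
def ext0 {ι R : Type} [Zero R] {e : ℕ} (y : Fin (e + 1) × ι → R) (m : ℕ) (i : ι) : R :=
  if h : m < e + 1 then y (⟨m, h⟩, i) else 0

/-- The coefficient of `t ^ l` in the quadratic form `b(y, y)` evaluated at the vector of
polynomials `∑ m, y m * t ^ m`. -/
def coeffForm {k ι : Type} [CommRing k] [Fintype ι] (B : ι → ι → k) {R : Type} [CommRing R]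
    [Algebra k R] {e : ℕ} (y : Fin (e + 1) × ι → R) (l : ℕ) : R :=
  ∑ p ∈ Finset.HasAntidiagonal.antidiagonal l, bf B R (ext0 y p.1) (ext0 y p.2)

section

lemma map_ext0 {ι R S F : Type} [Zero R] [Zero S] [FunLike F R S] [ZeroHomClass F R S] (f : F)
    {e : ℕ} (y : Fin (e + 1) × ι → R) (m : ℕ) (i : ι) :
    f (ext0 y m i) = ext0 (fun p => f (y p)) m i := by
  unfold ext0
  split_ifs <;> simp

lemma ext0_eq_zero {ι R : Type} [Zero R] {e : ℕ} (y : Fin (e + 1) × ι → R) {m : ℕ} (hm : e < m) :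
    ext0 y m = 0 := by
  funext i
  exact dif_neg (by omega)

variable {k ι : Type} [CommRing k] [Fintype ι] {R S : Type} [CommRing R] [CommRing S]
  [Algebra k R] [Algebra k S]

lemma map_coeffForm (B : ι → ι → k) (f : R →ₐ[k] S) {e : ℕ} (y : Fin (e + 1) × ι → R) (l : ℕ) :
    f (coeffForm B y l) = coeffForm B (fun p => f (y p)) l := by
  simp only [coeffForm, map_sum, map_bf, map_ext0]

/-- Leading terms of a vanishing sum of powers of `s` times coefficients reduce to a vanishing
sum. -/
lemma sum_eq_zero_of_leading {O κ α : Type} [CommRing O] [IsDomain O] [Field κ] (ρ : O →+* κ)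
    {s : O} (hs0 : s ≠ 0) (hs : ρ s = 0) [DecidableEq α] (I J : Finset α) (hJI : J ⊆ I) (E : α → ℕ)
    (c : ℕ) (hJ : ∀ i ∈ J, E i = c) (hI : ∀ i ∈ I, i ∉ J → c < E i) (g : α → O)
    (h : ∑ i ∈ I, s ^ E i * g i = 0) : ∑ i ∈ J, ρ (g i) = 0 := by
  have h1 : ∀ i ∈ I, s ^ E i * g i = s ^ c * (s ^ (E i - c) * g i) := by
    intro i hi
    have : c ≤ E i := by
      by_cases hiJ : i ∈ J
      · exact (hJ i hiJ).ge
      · exact (hI i hi hiJ).le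
    rw [← mul_assoc, ← pow_add, Nat.add_sub_cancel' this]
  rw [Finset.sum_congr rfl h1, ← Finset.mul_sum] at h
  have h2 := congrArg ρ ((mul_eq_zero.1 h).resolve_left (pow_ne_zero c hs0))
  rw [map_sum, map_zero] at h2
  rw [← h2, ← Finset.sum_subset hJI]
  · exact Finset.sum_congr rfl fun i hi => by simp [hJ i hi]
  · intro i hi hiJ
    have := hI i hi hiJ
    rw [map_mul, map_pow, hs, zero_pow (by omega), zero_mul]

end

/-- After scaling, a nonzero vector over the fraction field of a valuation ring is integral with
one coordinate equal to `1`. -/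
lemma exists_integral_scaling {O Ω τ : Type} [CommRing O] [IsDomain O] [ValuationRing O] [Field Ω]
    [Algebra O Ω] [IsFractionRing O Ω] [Finite τ] (z : τ → Ω) (hz : z ≠ 0) :
    ∃ (c : Ω) (w : τ → O) (i₀ : τ), c ≠ 0 ∧ w i₀ = 1 ∧ ∀ i, z i = c * algebraMap O Ω (w i) := by
  cases nonempty_fintype τ
  obtain ⟨i₁, hi₁⟩ := Function.ne_iff.1 hz
  let v := ValuationRing.valuation O Ω
  obtain ⟨i₀, -, hi₀⟩ := Finset.exists_max_image Finset.univ (fun i => v (z i)) ⟨i₁, Finset.mem_univ _⟩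
  have h0 : z i₀ ≠ 0 := by
    intro h0
    have := hi₀ i₁ (Finset.mem_univ _)
    rw [h0, map_zero, le_zero_iff, Valuation.zero_iff] at this
    exact hi₁ this
  have hw : ∀ i, ∃ w : O, algebraMap O Ω w = z i / z i₀ := by
    intro i
    rw [← ValuationRing.mem_integer_iff, Valuation.mem_integer_iff, map_div₀]
    exact div_le_one_of_le₀ (hi₀ i (Finset.mem_univ _)) zero_le
  choose w hw using hw
  refine ⟨z i₀, w, i₀, h0, ?_, fun i => ?_⟩
  · apply IsFractionRing.injective O Ω
    rw [hw, div_self h0, map_one]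
  · rw [hw, mul_div_cancel₀ _ h0]

/-- Degeneration of the system of equations under the weights `m ^ 2`: over the special fibre it
becomes a tangency chain cut by `d` generic linear forms, which has no nonzero solution. Writing
`y m = s ^ (m ^ 2) * w m`, the terms of the coefficient of `t ^ l` that survive at `s = 0` are those
`b (w a, w b)` with `a + b = l` for which `a ^ 2 + b ^ 2` is least: `a = b` for even `l`, and
`|a - b| = 1` for odd `l`. -/
lemma Nonsing.eq_zero_of_degeneration {k ι κ O Ω : Type} [Field k] [Fintype ι]
    {A : Fin 2 → ι → ι → k} [Field κ] [Algebra k κ] [IsAlgClosed κ]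
    [CommRing O] [IsDomain O] [ValuationRing O] [Field Ω] [Algebra O Ω] [IsFractionRing O Ω]
    [Algebra k O] [Algebra k Ω] [IsScalarTower k O Ω]
    (h : Nonsing A (AlgebraicClosure k)) (hn : 6 ≤ Fintype.card ι) {e d : ℕ}
    (hd : e * (Fintype.card ι - 4) + (Fintype.card ι - 2) ≤ d) (ρ : O →ₐ[k] κ) (s : O)
    (hs0 : s ≠ 0) (hs : ρ s = 0) (u : Option (Fin d × (Fin (e + 1) × ι)) → O)
    (hu : AlgebraicIndependent k fun t => ρ (u t)) (y : Fin (e + 1) × ι → Ω)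
    (hf : ∀ j, ∀ l < 2 * e + 1, coeffForm (A j) y l = 0)
    (hl : ∀ j, ∑ p, algebraMap O Ω (u (some (j, p))) * (algebraMap O Ω s ^ (p.1 : ℕ) ^ 2)⁻¹ * y p
      = 0) : y = 0 := by
  classical
  by_contra hy
  set σ := algebraMap O Ω s with hσ
  have hσ0 : σ ≠ 0 := fun h0 => hs0 (IsFractionRing.injective O Ω (by rw [← hσ, h0, map_zero]))
  obtain ⟨c, w, p₀, hc, hw₀, hw⟩ := exists_integral_scaling (O := O)
    (fun p => (σ ^ (p.1 : ℕ) ^ 2)⁻¹ * y p) (fun h0 => hy (funext fun p => by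
      have := congrFun h0 p
      exact (mul_eq_zero.1 this).resolve_left (inv_ne_zero (pow_ne_zero _ hσ0))))
  have hyw : ∀ p, y p = σ ^ (p.1 : ℕ) ^ 2 * c * algebraMap O Ω (w p) := by
    intro p
    have := hw p
    rw [inv_mul_eq_iff_eq_mul₀ (pow_ne_zero _ hσ0)] at this
    rw [this, mul_assoc]
  have hyw' : ∀ m, ext0 y m = (σ ^ m ^ 2 * c) • fun i => algebraMap O Ω (ext0 w m i) := by
    intro m
    funext i
    simp only [ext0, Pi.smul_apply, smul_eq_mul]
    split_ifs
    · exact hyw _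
    · simp
  let z : Fin (e + 1) × ι → κ := fun p => ρ (w p)
  have hsum : ∀ j, ∀ l < 2 * e + 1, ∑ p ∈ Finset.HasAntidiagonal.antidiagonal l,
      s ^ (p.1 ^ 2 + p.2 ^ 2) * bf (A j) O (ext0 w p.1) (ext0 w p.2) = 0 := by
    intro j l hl
    apply IsFractionRing.injective O Ω
    have h1 := hf j l hl
    have h2 : coeffForm (A j) y l = c ^ 2 * algebraMap O Ω (∑ p ∈ Finset.HasAntidiagonal.antidiagonal l,
      s ^ (p.1 ^ 2 + p.2 ^ 2) * bf (A j) O (ext0 w p.1) (ext0 w p.2)) := by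
      rw [coeffForm, map_sum, Finset.mul_sum]
      refine Finset.sum_congr rfl fun p _ => ?_
      have h3 := map_bf (A j) (IsScalarTower.toAlgHom k O Ω) (ext0 w p.1) (ext0 w p.2)
      simp only [IsScalarTower.coe_toAlgHom'] at h3
      rw [hyw', hyw', map_smul, map_smul, LinearMap.smul_apply, map_mul, h3, map_pow, pow_add,
        smul_eq_mul, smul_eq_mul]
      ring
    rw [h2] at h1
    rw [map_zero]
    exact (mul_eq_zero.1 h1).resolve_left (pow_ne_zero 2 hc)
  have hρ : ∀ j m m', ρ (bf (A j) O (ext0 w m) (ext0 w m')) = bf (A j) κ (ext0 z m) (ext0 z m') := by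
    intro j m m'
    rw [map_bf]
    simp only [map_ext0]
    rfl
  -- the even coefficients
  have heven : ∀ m j, bf (A j) κ (ext0 z m) (ext0 z m) = 0 := by
    intro m j
    by_cases hm : e < m
    · simp [ext0_eq_zero z hm]
    have := sum_eq_zero_of_leading ρ.toRingHom hs0 hs (Finset.HasAntidiagonal.antidiagonal (2 * m)) {(m, m)}
      (by simp; omega) (fun p => p.1 ^ 2 + p.2 ^ 2) (2 * m ^ 2)
      (by simp; ring) (by
        rintro ⟨a, b⟩ hab hne
        rw [Finset.HasAntidiagonal.mem_antidiagonal] at hab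
        simp only [Finset.mem_singleton, Prod.mk.injEq, not_and] at hne
        simp only at hab ⊢
        rcases lt_trichotomy a m with hlt | heq | hgt
        · obtain ⟨t, rfl⟩ := Nat.exists_eq_add_of_lt hlt
          obtain rfl : b = a + t + 1 + t + 1 := by omega
          nlinarith
        · exact absurd (by omega) (hne heq)
        · obtain ⟨t, rfl⟩ := Nat.exists_eq_add_of_lt hgt
          obtain rfl : m = b + t + 1 := by omega
          nlinarith) _ (hsum j (2 * m) (by omega))
    rw [Finset.sum_singleton] at this
    exact (hρ j m m).symm.trans this
  -- the odd coefficients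
  have hodd : ∀ m j, pol (A j) κ (ext0 z m) (ext0 z (m + 1)) = 0 := by
    intro m j
    by_cases hm : e < m + 1
    · simp [ext0_eq_zero z hm]
    have := sum_eq_zero_of_leading ρ.toRingHom hs0 hs (Finset.HasAntidiagonal.antidiagonal (2 * m + 1))
      {(m, m + 1), (m + 1, m)}
      (by
        intro p hp
        rw [Finset.mem_insert, Finset.mem_singleton] at hp
        rw [Finset.HasAntidiagonal.mem_antidiagonal]
        rcases hp with rfl | rfl <;> simp <;> omega)
      (fun p => p.1 ^ 2 + p.2 ^ 2) (m ^ 2 + (m + 1) ^ 2)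
      (by
        intro p hp
        rw [Finset.mem_insert, Finset.mem_singleton] at hp
        rcases hp with rfl | rfl
        · rfl
        · exact add_comm _ _) (by
        rintro ⟨a, b⟩ hab hne
        rw [Finset.HasAntidiagonal.mem_antidiagonal] at hab
        simp only [Finset.mem_singleton, Finset.mem_insert, Prod.mk.injEq, not_or, not_and] at hne
        simp only at hab ⊢
        rcases lt_trichotomy a m with hlt | heq | hgt
        · obtain ⟨t, rfl⟩ := Nat.exists_eq_add_of_lt hlt
          obtain rfl : b = a + t + 1 + t + 1 + 1 := by omega
          nlinarith
        · exact absurd (by omega) (hne.1 heq)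
        · have hne' : a ≠ m + 1 := fun h => hne.2 h (by omega)
          obtain ⟨t, rfl⟩ := Nat.exists_eq_add_of_lt (show m + 1 < a by omega)
          obtain rfl : m = b + t + 1 := by omega
          nlinarith) _ (hsum j (2 * m + 1) (by omega))
    rw [Finset.sum_pair (by simp)] at this
    rw [pol_apply, ← hρ, ← hρ]
    exact this
  -- the scalar `ρ (u none)` makes the reduction a generic multiple of itself
  obtain ⟨T, hT, hTz⟩ := h.chain hn (fun m => ρ (u none) • ext0 z m)
    (fun m j => by simp [heven]) (fun m j => by simp [hodd]) e
  refine generic_forms_no_zero (fun t => ρ (u t)) hu z p₀ (by simp [z, hw₀]) (fun j => ?_) T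
    (hT.trans hd) (fun p => ?_)
  · have h1 : c * algebraMap O Ω (∑ p, u (some (j, p)) * w p) = 0 := by
      rw [← hl j, map_sum, Finset.mul_sum]
      refine Finset.sum_congr rfl fun p _ => ?_
      rw [hyw, map_mul]
      field_simp
    have h2 := (mul_eq_zero.1 h1).resolve_left hc
    have h3 : ∑ p, u (some (j, p)) * w p = 0 :=
      IsFractionRing.injective O Ω (by rw [h2, map_zero])
    have h4 := congrArg ρ h3
    simpa [z] using h4
  · have := hTz p.1 (by omega) p.2
    simpa [ext0, Nat.lt_succ_iff.1 p.1.2] using this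

/-! ### Linear forms cutting the space of polynomial solutions -/

/-- An extension field of `F[s]` carries a valuation ring containing `F[s]` in which `s` is not
invertible. -/
lemma exists_valuationSubring {F Ω : Type} [Field F] [Field Ω] (f : Polynomial F →+* Ω)
    (hf : Function.Injective f) : ∃ V : ValuationSubring Ω, (∀ p, f p ∈ V) ∧
      f Polynomial.X ∈ V.nonunits := by
  let x : f.range := ⟨f Polynomial.X, ⟨_, rfl⟩⟩
  have hI : Ideal.span {x} ≠ ⊤ := by
    intro htop
    obtain ⟨⟨_, p, rfl⟩, hp⟩ := Ideal.mem_span_singleton'.1 ((Ideal.eq_top_iff_one _).1 htop)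
    have h1 : f (p * Polynomial.X) = f 1 := by
      rw [map_mul, map_one]
      exact congrArg Subtype.val hp
    have h2 := congrArg (Polynomial.eval 0) (hf h1)
    simp at h2
  obtain ⟨V, hV, hV'⟩ := Ideal.image_subset_nonunits_valuationSubring _ hI
  exact ⟨V, fun p => hV ⟨p, rfl⟩, hV' ⟨x, Ideal.subset_span rfl, rfl⟩⟩

/-- Over some algebraically closed extension, `e (n - 4) + n - 2` linear forms can be found which,
together with the equations of the space of polynomial solutions of degree at most `e`, have no
common zero other than the origin. -/
lemma Nonsing.exists_linearForms {k ι : Type} [Field k] [Fintype ι] {A : Fin 2 → ι → ι → k}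
    (h : Nonsing A (AlgebraicClosure k)) (hn : 6 ≤ Fintype.card ι) {e d : ℕ}
    (hd : e * (Fintype.card ι - 4) + (Fintype.card ι - 2) ≤ d) :
    ∃ (Ω : Type) (_ : Field Ω) (_ : Algebra k Ω) (_ : IsAlgClosed Ω)
      (c : Fin d → Fin (e + 1) × ι → Ω), ∀ y : Fin (e + 1) × ι → Ω,
        (∀ j, ∀ l < 2 * e + 1, coeffForm (A j) y l = 0) → (∀ j, ∑ p, c j p * y p = 0) → y = 0 := by
  let R := MvPolynomial (Option (Fin d × (Fin (e + 1) × ι))) k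
  let F := FractionRing R
  obtain ⟨Ω, _, _, f, hf⟩ : ∃ (Ω : Type) (_ : Field Ω) (_ : IsAlgClosed Ω) (f : Polynomial F →+* Ω),
      Function.Injective f :=
    ⟨AlgebraicClosure (RatFunc F), inferInstance, inferInstance,
      (algebraMap (RatFunc F) _).comp (algebraMap (Polynomial F) (RatFunc F)),
      (algebraMap (RatFunc F) _).injective.comp (IsFractionRing.injective _ _)⟩
  obtain ⟨V, hV, hX⟩ := exists_valuationSubring f hf
  let g : F →+* V := (f.comp Polynomial.C).codRestrict V fun x => hV _
  let _ : Algebra k V := (g.comp (algebraMap k F)).toAlgebra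
  let _ : Algebra k Ω := ((algebraMap V Ω).comp (algebraMap k V)).toAlgebra
  have : IsScalarTower k V Ω := IsScalarTower.of_algebraMap_eq fun _ => rfl
  let κ := AlgebraicClosure (IsLocalRing.ResidueField V)
  let ρ : V →ₐ[k] κ := IsScalarTower.toAlgHom k V κ
  let γ : F →ₐ[k] κ := { (ρ : V →+* κ).comp g with
    commutes' := fun r => ρ.commutes r }
  -- the coefficients of the linear forms are independent variables, and remain so after reduction
  let u : Option (Fin d × (Fin (e + 1) × ι)) → V := fun t => g (algebraMap R F (X t))
  have hu : AlgebraicIndependent k fun t => ρ (u t) := by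
    have h1 := (MvPolynomial.algebraicIndependent_X (Option (Fin d × (Fin (e + 1) × ι))) k).map'
      (f := IsScalarTower.toAlgHom k R F) (IsFractionRing.injective R F)
    exact h1.map' (f := γ) γ.toRingHom.injective
  let s : V := ⟨f Polynomial.X, hV _⟩
  have hs0 : s ≠ 0 := fun h0 => Polynomial.X_ne_zero (hf ((congrArg Subtype.val h0).trans
    (map_zero f).symm))
  have hs : ρ s = 0 := by
    change algebraMap (IsLocalRing.ResidueField V) κ (IsLocalRing.residue V s) = 0
    rw [(IsLocalRing.residue_eq_zero_iff s).2, map_zero]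
    rw [← SetLike.mem_coe, ← V.image_maximalIdeal] at hX
    obtain ⟨s', hs', hss'⟩ := hX
    rwa [show s = s' from Subtype.ext hss'.symm]
  refine ⟨Ω, inferInstance, inferInstance, inferInstance, fun j p => algebraMap V Ω (u (some (j, p)))
    * (algebraMap V Ω s ^ (p.1 : ℕ) ^ 2)⁻¹, fun y hy hl => ?_⟩
  exact h.eq_zero_of_degeneration hn hd ρ s hs0 hs u hu y hy hl

/-! ### Quadratic forms and bilinear forms -/

/-- A quadratic form is the diagonal of a bilinear form. -/
lemma exists_bf {k ι : Type} [CommRing k] [Fintype ι] {Q : MvPolynomial ι k}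
    (hQ : Q.IsHomogeneous 2) : ∃ A : ι → ι → k, ∀ (R : Type) [CommRing R] [Algebra k R] (x : ι → R),
      aeval x Q = bf A R x x := by
  classical
  suffices ∃ A : ι → ι → k, Q = bf A _ X X by
    obtain ⟨A, hA⟩ := this
    refine ⟨A, fun R _ _ x => ?_⟩
    rw [hA, map_bf]
    simp
  rw [Q.as_sum]
  refine Finset.sum_induction _ (fun P => ∃ A : ι → ι → k, P = bf A _ X X) ?_
    ⟨0, by simp [bf_apply]⟩ ?_
  · rintro _ _ ⟨A, rfl⟩ ⟨A', rfl⟩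
    exact ⟨A + A', by simp [bf_apply, add_smul, Finset.sum_add_distrib]⟩
  · intro d hd
    have hdeg : Multiset.card (Finsupp.toMultiset d) = 2 := by
      rw [Finsupp.card_toMultiset]
      by_contra hne
      exact mem_support_iff.1 hd (hQ.coeff_eq_zero hne)
    obtain ⟨i, j, hij⟩ := Multiset.card_eq_two.1 hdeg
    refine ⟨Pi.single i (Pi.single j (coeff d Q)), ?_⟩
    have hd' : d = Finsupp.single i 1 + Finsupp.single j 1 := by
      refine (Multiset.toFinsupp (α := ι)).symm.injective ?_
      change Finsupp.toMultiset d = Finsupp.toMultiset _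
      rw [hij]
      simp
    rw [bf_apply, Finset.sum_eq_single i, Finset.sum_eq_single j]
    · rw [Pi.single_eq_same, Pi.single_eq_same]
      conv_lhs => rw [hd']
      simp [X, monomial_mul, smul_monomial, ← hd']
    · intro l _ hl; simp [hl]
    · simp
    · intro l _ hl; simp [hl]
    · simp

/-- The gradient of a quadratic form is given by the polar form. -/
lemma eval_pderiv_eq_pol {k ι E : Type} [CommRing k] [Fintype ι] [DecidableEq ι] [CommRing E]
    [Algebra k E] {Q : MvPolynomial ι k} {A : ι → ι → k}
    (hA : ∀ (R : Type) [CommRing R] [Algebra k R] (x : ι → R), aeval x Q = bf A R x x) (v : ι → E)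
    (i : ι) : eval v (pderiv i (map (algebraMap k E) Q)) = pol A E v (Pi.single i 1) := by
  have h1 : map (algebraMap k E) Q = bf A (MvPolynomial ι E) X X := by
    rw [← hA]
    rw [aeval_def, map_eq_eval₂Hom_C_comp, IsScalarTower.algebraMap_eq k E (MvPolynomial ι E),
      algebraMap_eq, coe_eval₂Hom]
  have hs : ∀ (a : k) (P : MvPolynomial ι E), eval v (a • P) = a • eval v P := by
    intro a P
    rw [← algebraMap_smul E a P, smul_eval, Algebra.smul_def]
  have hp : ∀ (a : k) (P : MvPolynomial ι E), pderiv i (a • P) = a • pderiv i P := by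
    intro a P
    rw [← algebraMap_smul E a P, Derivation.map_smul, algebraMap_smul]
  rw [h1, pol_apply, bf_apply, bf_apply, bf_apply]
  simp only [map_sum, hp, hs, Derivation.leibniz, map_add, smul_eq_mul, map_mul, eval_X, smul_add,
    Finset.sum_add_distrib, pderiv_X]
  congr 1
  · refine Finset.sum_congr rfl fun l _ => Finset.sum_congr rfl fun m _ => ?_
    by_cases h : m = i
    · subst h; simp
    · simp [h]
  · refine Finset.sum_congr rfl fun l _ => Finset.sum_congr rfl fun m _ => ?_
    by_cases h : l = i
    · subst h; simp
    · simp [h]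


/-- Smoothness of the complete intersection of two quadrics, in terms of bilinear forms. -/
lemma nonsing_of_smooth {k ι : Type} [Field k] [Fintype ι] [DecidableEq ι]
    {Q : Fin 2 → MvPolynomial ι k} {A : Fin 2 → ι → ι → k}
    (hA : ∀ j, ∀ (R : Type) [CommRing R] [Algebra k R] (x : ι → R), aeval x (Q j) = bf (A j) R x x)
    (E : Type) [Field E] [Algebra k E]
    (hsmooth : ∀ v : ι → E, v ≠ 0 → (∀ j, eval v (map (algebraMap k E) (Q j)) = 0) →
      LinearIndependent E fun j i => eval v (pderiv i (map (algebraMap k E) (Q j)))) :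
    Nonsing A E := by
  intro v hv c hc hcv
  by_contra hv0
  have h1 := hsmooth v hv0 fun j => by rw [eval_map, ← aeval_def, hA, hv]
  refine hc (funext fun j => Fintype.linearIndependent_iff.1 h1 c ?_ j)
  funext i
  simpa [eval_pderiv_eq_pol (hA _)] using hcv (Pi.single i 1)

/-! ### Counting over a finite field -/

/-- Let quadratic forms `f` and linear forms with coefficients `c` be as many as there are
variables, with no common zero but the origin. On points with coordinates in `F_q`, the linear form
`ℓ` satisfies `ℓ ^ q = m`, where the coefficients of `m` are the `q`-th powers of those of `ℓ`; the
equations `f = 0` and `ℓ ^ q - m = 0` then have only finitely many common zeros, bounded in number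
by Bézout. -/
lemma card_le_of_linearForms {k σ β γ Ω : Type} [Field k] [Fintype k] [Fintype σ] [Fintype β]
    [Fintype γ] [Field Ω] [Algebra k Ω] [IsAlgClosed Ω] (f : β → MvPolynomial σ Ω)
    (hf : ∀ b, (f b).IsHomogeneous 2) (c : γ → σ → Ω)
    (hcard : Fintype.card β + Fintype.card γ = Fintype.card σ)
    (hc : ∀ x : σ → Ω, (∀ b, eval x (f b) = 0) → (∀ j, ∑ p, c j p * x p = 0) → x = 0)
    (S : Finset (σ → k)) (hS : ∀ y ∈ S, ∀ b, eval (fun p => algebraMap k Ω (y p)) (f b) = 0) :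
    S.card ≤ 2 ^ Fintype.card β * Fintype.card k ^ Fintype.card γ := by
  classical
  have hq2 : 2 ≤ Fintype.card k := Fintype.one_lt_card
  obtain ⟨p, hp⟩ := CharP.exists k
  obtain ⟨r, hpp, hr⟩ := FiniteField.card k p
  have : ExpChar k p := ExpChar.prime hpp
  have : ExpChar Ω p := expChar_of_injective_algebraMap (algebraMap k Ω).injective p
  have hq : ∀ y : k, y ^ Fintype.card k = y := FiniteField.pow_card
  have hpow : ∀ g : σ → Ω, (∑ i, g i) ^ Fintype.card k = ∑ i, g i ^ Fintype.card k :=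
    fun g => by rw [hr]; exact sum_pow_char_pow p _ _ _
  generalize Fintype.card k = q at *
  let ℓ : γ → MvPolynomial σ Ω := fun j => ∑ p, C (c j p) * X p
  let m : γ → MvPolynomial σ Ω := fun j => ∑ p, C (c j p ^ q) * X p
  have hlin : ∀ a : σ → Ω, (∑ p, C (a p) * X p : MvPolynomial σ Ω).IsHomogeneous 1 := fun a =>
    IsHomogeneous.sum _ _ _ fun p _ => by
      simpa using (isHomogeneous_C σ (a p)).mul (isHomogeneous_X Ω p)
  let t : β ⊕ γ → MvPolynomial σ Ω := Sum.elim f fun j => ℓ j ^ q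
  let F : β ⊕ γ → MvPolynomial σ Ω := Sum.elim f fun j => ℓ j ^ q - m j
  let δ : β ⊕ γ → ℕ := Sum.elim (fun _ => 2) fun _ => q
  have hδ : ∀ a, 0 < δ a := by
    rintro (b | j)
    · exact two_pos
    · exact two_pos.trans_le hq2
  have ht : ∀ a, (t a).IsHomogeneous (δ a) := by
    rintro (b | j)
    · exact hf b
    · simpa [t, δ] using (hlin (c j)).pow q
  have hFt : ∀ a, (F a - t a).totalDegree < δ a := by
    rintro (b | j)
    · simp [F, t, δ]
    · simp only [F, t, δ, Sum.elim_inr, sub_sub_cancel_left, totalDegree_neg]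
      exact (hlin fun p => c j p ^ q).totalDegree_le.trans_lt hq2
  have hzero : ∀ x, (∀ a, eval x (t a) = 0) → x = 0 := by
    intro x hx
    refine hc x (fun b => hx (Sum.inl b)) fun j => ?_
    have := hx (Sum.inr j)
    simp only [t, Sum.elim_inr, map_pow] at this
    simpa [ℓ] using eq_zero_of_pow_eq_zero this
  have hdeg : ∀ a, (F a).totalDegree ≤ δ a := by
    intro a
    rw [← sub_add_cancel (F a) (t a)]
    exact (totalDegree_add _ _).trans (max_le (hFt a).le (ht a).totalDegree_le)
  let φ : (σ → k) ↪ (σ → Ω) :=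
    ⟨fun y p => algebraMap k Ω (y p), fun y y' hy => funext fun p =>
      (algebraMap k Ω).injective (congrFun hy p)⟩
  have hφ : ∀ y p, φ y p = algebraMap k Ω (y p) := fun _ _ => rfl
  have key := card_le_prod (by rw [Fintype.card_sum, hcard]) F δ hδ hdeg
    (isIntegral_of_leadingForms F t δ hδ ht hFt hzero) (S.map φ) ?_
  · simpa [δ, Fintype.prod_sum_type] using key
  · intro x hx a
    obtain ⟨y, hy, rfl⟩ := Finset.mem_map.1 hx
    obtain (b | j) := a
    · exact hS y hy b
    · simp only [F, Sum.elim_inr, map_sub, ℓ, m, map_sum, map_mul, map_pow, eval_C, eval_X,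
        hφ, hpow, mul_pow]
      rw [sub_eq_zero]
      refine Finset.sum_congr rfl fun p _ => ?_
      rw [← map_pow (algebraMap k Ω), hq]

lemma isHomogeneous_bf {k ι σ : Type} [Field k] [Fintype ι] (B : ι → ι → k) {Ω : Type} [Field Ω]
    [Algebra k Ω] {x y : ι → MvPolynomial σ Ω} (hx : ∀ i, (x i).IsHomogeneous 1)
    (hy : ∀ i, (y i).IsHomogeneous 1) : (bf B _ x y).IsHomogeneous 2 := by
  rw [bf_apply]
  refine IsHomogeneous.sum _ _ _ fun i _ => IsHomogeneous.sum _ _ _ fun j _ => ?_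
  rw [← algebraMap_smul Ω, smul_eq_C_mul]
  simpa using (isHomogeneous_C _ _).mul ((hx i).mul (hy j))

lemma isHomogeneous_coeffForm {k ι : Type} [Field k] [Fintype ι] (B : ι → ι → k) {Ω : Type}
    [Field Ω] [Algebra k Ω] {e : ℕ} (l : ℕ) :
    (coeffForm (e := e) B (X : _ → MvPolynomial (Fin (e + 1) × ι) Ω) l).IsHomogeneous 2 := by
  have h : ∀ m i, (ext0 (e := e) (X : _ → MvPolynomial (Fin (e + 1) × ι) Ω) m i).IsHomogeneous 1 := by
    intro m i
    unfold ext0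
    split_ifs
    · exact isHomogeneous_X _ _
    · exact isHomogeneous_zero _ _ _
  exact IsHomogeneous.sum _ _ _ fun p _ => isHomogeneous_bf B (h _) (h _)

lemma eval_coeffForm_X {k ι : Type} [Field k] [Fintype ι] (B : ι → ι → k) {Ω : Type}
    [Field Ω] [Algebra k Ω] {e : ℕ} (l : ℕ) (x : Fin (e + 1) × ι → Ω) :
    eval x (coeffForm (e := e) B X l) = coeffForm B x l := by
  have := map_coeffForm B ((aeval (R := Ω) x).restrictScalars k) (e := e) X l
  simpa [coe_aeval_eq_eval] using this

/-- The bound for the number of solutions of degree at most `e` over a finite field, in terms of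
their coefficient vectors. -/
lemma Nonsing.card_le {k ι : Type} [Field k] [Fintype k] [Fintype ι] {A : Fin 2 → ι → ι → k}
    (h : Nonsing A (AlgebraicClosure k)) (hn : 6 ≤ Fintype.card ι) {e : ℕ}
    (S : Finset (Fin (e + 1) × ι → k))
    (hS : ∀ y ∈ S, ∀ j, ∀ l < 2 * e + 1, coeffForm (A j) y l = 0) :
    S.card ≤ 2 ^ (2 * (2 * e + 1)) *
      Fintype.card k ^ (e * (Fintype.card ι - 4) + (Fintype.card ι - 2)) := by
  obtain ⟨Ω, _, _, _, c, hc⟩ := h.exists_linearForms hn (e := e) le_rfl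
  have key := card_le_of_linearForms
    (fun a : Fin 2 × Fin (2 * e + 1) => coeffForm (A a.1) (X : _ → MvPolynomial _ Ω) a.2)
    (fun a => isHomogeneous_coeffForm _ _) c ?_ (fun x hx => hc x fun j l hl => ?_) S
    fun y hy a => ?_
  · simpa using key
  · obtain ⟨N, hN⟩ := Nat.exists_eq_add_of_le hn
    simp only [Fintype.card_prod, Fintype.card_fin, hN]
    rw [show 6 + N - 4 = N + 2 by omega, show 6 + N - 2 = N + 4 by omega]
    ring
  · rw [← eval_coeffForm_X]
    exact hx (j, ⟨l, hl⟩)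
  · rw [eval_coeffForm_X]
    have h1 := map_coeffForm (A a.1) (Algebra.ofId k Ω) y a.2
    rw [hS y hy _ _ a.2.2, map_zero] at h1
    exact h1.symm

/-- The coefficients of a quadratic form at a vector of polynomials. -/
lemma coeff_bf {k ι : Type} [CommRing k] [Fintype ι] (B : ι → ι → k) (x : ι → Polynomial k) {e : ℕ}
    (hx : ∀ i, (x i).degree ≤ (e : ℕ)) (l : ℕ) :
    (bf B _ x x).coeff l = coeffForm B (fun p : Fin (e + 1) × ι => (x p.2).coeff p.1) l := by
  have h : ∀ m i, ext0 (fun p : Fin (e + 1) × ι => (x p.2).coeff p.1) m i = (x i).coeff m := by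
    intro m i
    unfold ext0
    split_ifs with hm
    · rfl
    · exact (Polynomial.coeff_eq_zero_of_degree_lt ((hx i).trans_lt (by exact_mod_cast
        (by omega : e < m)))).symm
  simp only [coeffForm, bf_apply, h, Polynomial.finsetSum_coeff, Polynomial.coeff_smul,
    Polynomial.coeff_mul, Finset.smul_sum]
  conv_rhs => rw [Finset.sum_comm]
  refine Finset.sum_congr rfl fun i _ => ?_
  rw [Finset.sum_comm]

/-- Let `q` be a prime power, `n ≥ 6`, and `Q₁, Q₂` quadratic forms in `n`
variables over `F_q` whose common projective zero locus is a smooth complete intersection of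
codimension 2 over the algebraic closure. Then there is a constant `c > 0` such that for
every `e ≥ 1` the number of tuples `x ∈ F_q[t]^n` with `gcd = 1`, `max_i deg x_i = e` and
`Q₁(x(t)) = Q₂(x(t)) = 0` is at most `c * 16^e * q^(e(n-4))`. -/
theorem stmt_5 (q n : ℕ) (hq : ∃ p k : ℕ, p.Prime ∧ 0 < k ∧ q = p ^ k)
    (Fq : Type) [Field Fq] [Fintype Fq] (hcard : Fintype.card Fq = q)
    (hn : 6 ≤ n) (Q₁ Q₂ : MvPolynomial (Fin n) Fq)
    (hQ₁ : Q₁ ≠ 0) (hQ₂ : Q₂ ≠ 0)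
    (hhom₁ : Q₁.IsHomogeneous 2) (hhom₂ : Q₂.IsHomogeneous 2)
    (hsmooth : ∀ v : Fin n → AlgebraicClosure Fq, v ≠ 0 →
      eval v (MvPolynomial.map (algebraMap Fq (AlgebraicClosure Fq)) Q₁) = 0 →
      eval v (MvPolynomial.map (algebraMap Fq (AlgebraicClosure Fq)) Q₂) = 0 →
      LinearIndependent (AlgebraicClosure Fq)
        ![fun i => eval v (pderiv i (MvPolynomial.map (algebraMap Fq (AlgebraicClosure Fq)) Q₁)),
          fun i => eval v (pderiv i (MvPolynomial.map (algebraMap Fq (AlgebraicClosure Fq)) Q₂))]) :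
    ∃ c : ℕ, 0 < c ∧ ∀ e : ℕ, 1 ≤ e →
      {x : Fin n → Polynomial Fq |
          (∃ b : Fin n → Polynomial Fq, ∑ i, b i * x i = 1) ∧
          (∀ i, (x i).degree ≤ (e : ℕ)) ∧ (∃ i, (x i).degree = (e : ℕ)) ∧
          MvPolynomial.aeval x Q₁ = 0 ∧ MvPolynomial.aeval x Q₂ = 0}.Finite ∧
      {x : Fin n → Polynomial Fq |
          (∃ b : Fin n → Polynomial Fq, ∑ i, b i * x i = 1) ∧
          (∀ i, (x i).degree ≤ (e : ℕ)) ∧ (∃ i, (x i).degree = (e : ℕ)) ∧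
          MvPolynomial.aeval x Q₁ = 0 ∧ MvPolynomial.aeval x Q₂ = 0}.ncard
        ≤ c * 16 ^ e * q ^ (e * (n - 4)) := by
  have hhom : ∀ j, (![Q₁, Q₂] j).IsHomogeneous 2 := Fin.forall_fin_two.2 ⟨hhom₁, hhom₂⟩
  choose A hA using fun j => exists_bf (hhom j)
  have hA₁ : ∀ x : Fin n → Polynomial Fq, aeval x Q₁ = bf (A 0) _ x x := hA 0 _
  have hA₂ : ∀ x : Fin n → Polynomial Fq, aeval x Q₂ = bf (A 1) _ x x := hA 1 _
  have hns : Nonsing A (AlgebraicClosure Fq) := by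
    refine nonsing_of_smooth hA _ fun v hv hv' => ?_
    convert hsmooth v hv (hv' 0) (hv' 1) using 1
    funext j
    fin_cases j <;> rfl
  have hq0 : 0 < q := hcard ▸ Fintype.card_pos
  refine ⟨4 * q ^ (n - 2), by positivity, fun e _ => ?_⟩
  set T := {x : Fin n → Polynomial Fq |
          (∃ b : Fin n → Polynomial Fq, ∑ i, b i * x i = 1) ∧
          (∀ i, (x i).degree ≤ (e : ℕ)) ∧ (∃ i, (x i).degree = (e : ℕ)) ∧
          MvPolynomial.aeval x Q₁ = 0 ∧ MvPolynomial.aeval x Q₂ = 0} with hT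
  -- the vector of all coefficients
  let Φ : (Fin n → Polynomial Fq) → Fin (e + 1) × Fin n → Fq := fun x p => (x p.2).coeff p.1
  have hinj : Set.InjOn Φ T := by
    rintro x ⟨-, hx, -⟩ y ⟨-, hy, -⟩ hxy
    funext i
    ext m
    rcases lt_or_ge e m with hm | hm
    · have hm' : ((e : ℕ) : WithBot ℕ) < m := by exact_mod_cast hm
      rw [Polynomial.coeff_eq_zero_of_degree_lt ((hx i).trans_lt hm'),
        Polynomial.coeff_eq_zero_of_degree_lt ((hy i).trans_lt hm')]
    · exact congrFun hxy (⟨m, by omega⟩, i)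
  have hfin : (Φ '' T).Finite := Set.toFinite _
  refine ⟨hfin.of_finite_image hinj, ?_⟩
  rw [← hinj.ncard_image, Set.ncard_eq_toFinset_card _ hfin]
  refine (hns.card_le (by simpa using hn) _ fun y hy j l _ => ?_).trans (le_of_eq ?_)
  · obtain ⟨x, ⟨-, hx, -, hx₁, hx₂⟩, rfl⟩ := hfin.mem_toFinset.1 hy
    have h0 : ∀ j, bf (A j) _ x x = 0 :=
      Fin.forall_fin_two.2 ⟨(hA₁ x).symm.trans hx₁, (hA₂ x).symm.trans hx₂⟩
    rw [← coeff_bf (A j) x hx l, h0, Polynomial.coeff_zero]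
  · rw [hcard, Fintype.card_fin, pow_add q, show 2 * (2 * e + 1) = 2 + 4 * e by ring, pow_add,
      pow_mul]
    ring
end

section
/- Let K be an algebraically closed field, let n ≥ 4, and let F ∈ K[x_0,…,x_n] be a cubic form whose zero locus X = V(F) ⊂ P^n is smooth. Then the set E = {u ∈ K^{n+1} : F(u) = 0, and for every w ∈ K^{n+1} with F(w) = 0 and Σ_i w_i ∂F/∂x_i(u) = 0 one has F(s·u + t·w) = 0 for all s, t ∈ K} is Zariski closed in K^{n+1}; that is, the locus of Eckardt points of X is Zariski closed. -/
/-!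
Since `F` is a cubic form, `F (s u + t w) = s³ F(u) + s² t dF_u(w) + s t² dF_w(u) + t³ F(w)`.
So a vector `u` with `F u = 0` is an Eckardt vector exactly when the quadric `Q_u(w) = dF_w(u)`
vanishes on all zeros of `F` in the hyperplane `H = ker dF_u` (for `u ≠ 0`).

Smoothness forces `F|_H` to be squarefree: a square divisor of the nonzero cubic form `F|_H` would be
the square of a linear form `L`, so `F|_H` would be singular along `L = 0` (along all of `H` if
`F|_H = 0`). On `L = 0`, a space of dimension at least two, the quadratic form "derivative of `F` in
a direction transverse to `H`" has a nonzero zero, and there all the partial derivatives of `F`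
vanish. Hence, by the Nullstellensatz, `F|_H` divides `Q_u|_H`, and for degree reasons `Q_u|_H = 0`.

Thus `E` is cut out by `F u = 0` and `Q_u = 0` on `ker dF_u`. The vectors
`dF_u(y) x - dF_u(x) y` all lie in that kernel, and exhaust it when `dF_u ≠ 0`; they depend
polynomially on `u`, so `Q_u (dF_u(y) x - dF_u(x) y) = 0` for all `x`, `y` is the required family of
polynomial equations.
-/

open MvPolynomial

/-- `u` is an Eckardt vector of the cubic hypersurface `V(F)`. -/
def IsEckardtVec {K : Type} [Field K] {m : ℕ} (F : MvPolynomial (Fin m) K)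
    (u : Fin m → K) : Prop :=
  ∀ w : Fin m → K, eval w F = 0 →
    (∑ i, w i * eval u (pderiv i F)) = 0 →
    ∀ s t : K, eval (fun i => s * u i + t * w i) F = 0

/-! ### Differentials and the Taylor expansion of a cubic form -/

/-- The differential of `F` at `v`, as the linear form `w ↦ ∑ i, w i * ∂ᵢF(v)`. -/
noncomputable def diffForm {K : Type} [Field K] {m : ℕ} (F : MvPolynomial (Fin m) K)
    (v : Fin m → K) : (Fin m → K) →ₗ[K] K :=
  ∑ i, eval v (pderiv i F) • LinearMap.proj i

lemma diffForm_apply {K : Type} [Field K] {m : ℕ} (F : MvPolynomial (Fin m) K)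
    (v w : Fin m → K) : diffForm F v w = ∑ i, w i * eval v (pderiv i F) := by
  simp [diffForm, mul_comm]

lemma diffForm_add {K : Type} [Field K] {m : ℕ} (p q : MvPolynomial (Fin m) K)
    (v w : Fin m → K) : diffForm (p + q) v w = diffForm p v w + diffForm q v w := by
  simp [diffForm_apply, mul_add, Finset.sum_add_distrib]

lemma diffForm_mul {K : Type} [Field K] {m : ℕ} (p q : MvPolynomial (Fin m) K)
    (v w : Fin m → K) :
    diffForm (p * q) v w = eval v p * diffForm q v w + diffForm p v w * eval v q := by
  simp only [diffForm_apply, Derivation.leibniz, map_add, smul_eq_mul, map_mul, mul_add,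
    Finset.sum_add_distrib, Finset.mul_sum, Finset.sum_mul]
  congr 1 <;> exact Finset.sum_congr rfl fun _ _ => by ring

lemma diffForm_X {K : Type} [Field K] {m : ℕ} (i : Fin m)
    (v w : Fin m → K) : diffForm (X i) v w = w i := by
  classical
  simp [diffForm_apply, pderiv_X, Pi.single_apply, apply_ite]

lemma diffForm_C {K : Type} [Field K] {m : ℕ} (c : K)
    (v w : Fin m → K) : diffForm (C c) v w = 0 := by
  simp [diffForm_apply]

open Pointwise in
/-- Taylor expansion of a cubic form along a line; the coefficient of `s * t ^ 2` is the
differential at `w` in the direction `u`. -/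
lemma cubic_expand {K : Type} [Field K] {m : ℕ} (F : MvPolynomial (Fin m) K)
    (hF : F.IsHomogeneous 3) (u w : Fin m → K) (s t : K) :
    eval (fun i => s * u i + t * w i) F =
      s ^ 3 * eval u F + s ^ 2 * t * diffForm F u w + s * t ^ 2 * diffForm F w u
        + t ^ 3 * eval w F := by
  have hmem : F ∈ homogeneousSubmodule (Fin m) K 1 ^ 3 := by
    rw [homogeneousSubmodule_one_pow]; exact hF
  rw [homogeneousSubmodule_one_eq_span_X, Submodule.span_pow] at hmem
  clear hF
  induction hmem using Submodule.span_induction with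
  | mem x hx =>
    rw [pow_succ, pow_two] at hx
    obtain ⟨_, ⟨_, ⟨i, rfl⟩, _, ⟨j, rfl⟩, rfl⟩, _, ⟨k, rfl⟩, rfl⟩ := hx
    simp only [map_mul, eval_X, diffForm_mul, diffForm_X]
    ring
  | zero => simp [diffForm_apply]
  | add x y _ _ hx hy => simp only [map_add, diffForm_add, hx, hy]; ring
  | smul a x _ hx =>
    simp only [smul_eq_C_mul, map_mul, eval_C, diffForm_mul, diffForm_C, hx]; ring

/-! ### Zeros and divisors of forms -/

lemma eval_smul_of_homogeneous {K : Type} [Field K] {m d : ℕ} (q : MvPolynomial (Fin m) K)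
    (hq : q.IsHomogeneous d) (c : K) (v : Fin m → K) :
    eval (c • v) q = c ^ d * eval v q := by
  rw [eval_eq, eval_eq, Finset.mul_sum]
  refine Finset.sum_congr rfl fun e he => ?_
  have h := hq.degree_eq_sum_deg_support he
  simp only [Pi.smul_apply, smul_eq_mul, mul_pow, Finset.prod_mul_distrib]
  rw [Finset.prod_pow_eq_pow_sum, ← h]
  ring

lemma exists_linear_of_homogeneous_one {K : Type} [Field K] {m : ℕ} (A : MvPolynomial (Fin m) K)
    (hA : A.IsHomogeneous 1) : ∃ M : (Fin m → K) →ₗ[K] K, ∀ w, M w = eval w A := by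
  have hmem : A ∈ homogeneousSubmodule (Fin m) K 1 := hA
  rw [homogeneousSubmodule_one_eq_span_X] at hmem
  clear hA
  induction hmem using Submodule.span_induction with
  | mem x hx => obtain ⟨i, rfl⟩ := hx; exact ⟨LinearMap.proj i, by simp⟩
  | zero => exact ⟨0, by simp⟩
  | add x y _ _ hx hy =>
    obtain ⟨M, hM⟩ := hx
    obtain ⟨N, hN⟩ := hy
    exact ⟨M + N, by simp [hM, hN]⟩
  | smul a x _ hx =>
    obtain ⟨M, hM⟩ := hx
    exact ⟨a • M, by simp [hM, smul_eval]⟩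

lemma polynomial_eval_aeval {K : Type} [Field K] {m : ℕ} (g : Fin m → Polynomial K) (x : K)
    (q : MvPolynomial (Fin m) K) :
    (aeval g q : Polynomial K).eval x = eval (fun i => (g i).eval x) q := by
  induction q using MvPolynomial.induction_on with
  | C c => simp
  | add r r' hr hr' => rw [map_add, map_add, Polynomial.eval_add, hr, hr']
  | mul_X r i hr => rw [map_mul, map_mul, Polynomial.eval_mul, hr, aeval_X, eval_X]

lemma eval_aeval {K : Type} [Field K] {m k : ℕ} (h : Fin m → MvPolynomial (Fin k) K)
    (u : Fin k → K) (p : MvPolynomial (Fin m) K) :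
    eval u (aeval h p) = eval (fun j => eval u (h j)) p := by
  induction p using MvPolynomial.induction_on with
  | C c => simp
  | add r r' hr hr' => rw [map_add, map_add, map_add, hr, hr']
  | mul_X r i hr => rw [map_mul, map_mul, map_mul, hr, aeval_X, eval_X]

/-- Over an algebraically closed field, a form of positive degree has a nonzero zero on every
linear subspace of dimension at least two. -/
lemma exists_zero_of_homogeneous {K : Type} [Field K] [IsAlgClosed K] {m d : ℕ} (hd : d ≠ 0)
    (q : MvPolynomial (Fin m) K) (hq : q.IsHomogeneous d) (W : Submodule K (Fin m → K))
    (hW : 1 < Module.finrank K W) : ∃ v ∈ W, v ≠ 0 ∧ eval v q = 0 := by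
  have : Nontrivial W := Module.nontrivial_of_finrank_pos (R := K) (by omega)
  obtain ⟨a, ha⟩ := exists_ne (0 : W)
  obtain ⟨b, hab⟩ := exists_linearIndependent_pair_of_one_lt_finrank hW ha
  rw [LinearIndependent.pair_iff] at hab
  -- the restrictions of `q` to the affine lines `a * T + b` and `a + b * T`
  let p : Polynomial K := aeval (fun i => Polynomial.C (a.1 i) * Polynomial.X
    + Polynomial.C (b.1 i)) q
  let p' : Polynomial K := aeval (fun i => Polynomial.C (a.1 i)
    + Polynomial.C (b.1 i) * Polynomial.X) q
  have hp : ∀ x, p.eval x = eval (x • a.1 + b.1) q := by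
    intro x
    rw [polynomial_eval_aeval]
    congr 2
    ext i
    simp [mul_comm x]
  have hp' : ∀ x, p'.eval x = eval (a.1 + x • b.1) q := by
    intro x
    rw [polynomial_eval_aeval]
    congr 2
    ext i
    simp [mul_comm x]
  by_cases hdeg : p.degree = 0
  · refine ⟨a, a.2, by simpa using ha, ?_⟩
    rw [Polynomial.eq_C_of_degree_eq_zero hdeg] at hp
    set c := p.coeff 0
    -- `q (a + y b) = y ^ d q (a / y + b) = c y ^ d` for `y ≠ 0`, hence for `y = 0` too
    have heq : p' = Polynomial.C c * Polynomial.X ^ d := by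
      refine Polynomial.eq_of_infinite_eval_eq _ _ (Set.Infinite.mono (s := {0}ᶜ) ?_ ?_)
      · intro y hy
        have hy : y ≠ 0 := hy
        have h2 : a.1 + y • b.1 = y • (y⁻¹ • a.1 + b.1) := by
          rw [smul_add, smul_inv_smul₀ hy]
        simp only [Set.mem_ofPred_eq]
        rw [hp', h2, eval_smul_of_homogeneous q hq, ← hp]
        rw [Polynomial.eval_C, Polynomial.eval_mul, Polynomial.eval_C, Polynomial.eval_pow,
          Polynomial.eval_X, mul_comm]
      · exact (Set.finite_singleton _).infinite_compl
    have := hp' 0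
    rw [heq] at this
    simpa [hd] using this.symm
  · obtain ⟨x, hx⟩ := IsAlgClosed.exists_root p hdeg
    refine ⟨x • a.1 + b.1, W.add_mem (W.smul_mem _ a.2) b.2, ?_, by rw [← hp]; exact hx⟩
    intro h0
    have := hab x 1 (Subtype.ext (by simpa using h0))
    exact one_ne_zero this.2

/-- A non-unit whose square divides a nonzero cubic form is a linear form. -/
lemma homogeneous_of_sq_dvd_cubic {K : Type} [Field K] [Infinite K] {m : ℕ}
    (f A : MvPolynomial (Fin m) K) (hf : f.IsHomogeneous 3) (hf0 : f ≠ 0) (hA : A * A ∣ f)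
    (hAu : ¬ IsUnit A) : A.IsHomogeneous 1 := by
  obtain ⟨B, rfl⟩ := hA
  have hA0 : A ≠ 0 := by rintro rfl; simp at hf0
  have hB0 : B ≠ 0 := by rintro rfl; simp at hf0
  have hdeg := hf.totalDegree hf0
  rw [totalDegree_mul_of_isDomain (mul_ne_zero hA0 hA0) hB0,
    totalDegree_mul_of_isDomain hA0 hA0] at hdeg
  have hpos : A.totalDegree ≠ 0 := by
    intro h
    rw [totalDegree_eq_zero_iff_eq_C] at h
    apply hAu
    rw [h] at hA0 ⊢
    exact (IsUnit.mk0 _ (by rintro h'; simp [h'] at hA0)).map C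
  have h1 : A.totalDegree = 1 := by omega
  have hsum := sum_homogeneousComponent A
  rw [h1, Finset.sum_range_succ, Finset.sum_range_one, homogeneousComponent_zero] at hsum
  set L := homogeneousComponent 1 A with hLdef
  have hL : L.IsHomogeneous 1 := homogeneousComponent_isHomogeneous _ _
  set c := coeff 0 A
  by_cases hc : c = 0
  · rw [← hsum, hc]; simpa using hL
  -- If `c ≠ 0` and `L w ≠ 0`, then `A` vanishes at the nonzero multiple `(-c / L w) w` of `w`,
  -- hence so does `f` at `w`. So `L * f` vanishes everywhere, which is absurd.
  exfalso
  have hzero : L * (A * A * B) = 0 := by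
    apply MvPolynomial.funext
    intro w
    rw [map_zero, map_mul]
    by_contra hne
    have hLw := left_ne_zero_of_mul hne
    have hfw := right_ne_zero_of_mul hne
    have h := eval_smul_of_homogeneous _ hf (-c / eval w L) w
    have hAz : eval ((-c / eval w L) • w) A = 0 := by
      rw [← hsum, map_add, eval_C, eval_smul_of_homogeneous _ hL]
      field_simp
      ring
    rw [map_mul, map_mul, hAz] at h
    simp only [zero_mul] at h
    have := mul_ne_zero (pow_ne_zero 3 (div_ne_zero (neg_ne_zero.2 hc) hLw)) hfw
    exact this h.symm
  have hL0 : L = 0 := (mul_eq_zero.1 hzero).resolve_right hf0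
  rw [hL0, add_zero] at hsum
  rw [← hsum] at h1
  simp at h1

/-! ### Restriction to a linear subspace -/

/-- The substitution `x ↦ ∑ j, X j • b j`, which pulls polynomials back along the linear map
`w ↦ ∑ j, w j • b j`. -/
noncomputable def linSubst {K : Type} [Field K] {m k : ℕ} (b : Fin k → Fin m → K) (i : Fin m) :
    MvPolynomial (Fin k) K := ∑ j, C (b j i) * X j

lemma linSubst_homogeneous {K : Type} [Field K] {m k : ℕ} (b : Fin k → Fin m → K) (i : Fin m) :
    (linSubst b i).IsHomogeneous 1 :=
  IsHomogeneous.sum _ _ _ fun _ _ => isHomogeneous_C_mul_X _ _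

lemma eval_linSubst {K : Type} [Field K] {m k : ℕ} (b : Fin k → Fin m → K) (w : Fin k → K)
    (p : MvPolynomial (Fin m) K) :
    eval w (aeval (linSubst b) p) = eval (∑ j, w j • b j) p := by
  rw [eval_aeval]
  congr 2
  ext i
  simp [linSubst, mul_comm]

lemma pderiv_linSubst {K : Type} [Field K] {m k : ℕ} (b : Fin k → Fin m → K) (w : Fin k → K)
    (j : Fin k) (p : MvPolynomial (Fin m) K) :
    eval w (pderiv j (aeval (linSubst b) p)) = diffForm p (∑ j, w j • b j) (b j) := by
  classical
  induction p using MvPolynomial.induction_on with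
  | C c => simp [diffForm_C, algebraMap_eq]
  | add r r' hr hr' => rw [map_add, map_add, map_add, hr, hr', diffForm_add]
  | mul_X r i hr =>
    have h1 : eval w (pderiv j (linSubst b i)) = b j i := by
      simp [linSubst, pderiv_X, Pi.single_apply, apply_ite]
    rw [map_mul, aeval_X, Derivation.leibniz, diffForm_mul, diffForm_X, map_add, smul_eq_mul,
      smul_eq_mul, map_mul, map_mul, hr, h1, eval_linSubst]
    rw [← aeval_X (R := K) (linSubst b) i, eval_linSubst, eval_X]
    ring

/-! ### The restriction to the tangent hyperplane is squarefree -/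

/-- If every nonzero zero of the cubic form `F` is smooth and `Q_u` vanishes on the zeros of `F` in
the hyperplane `ker dF_u`, then `Q_u` vanishes on the whole hyperplane. The vector `e` is a
transverse direction, which witnesses `dF_u ≠ 0`. -/
lemma diffForm_eq_zero_of_eckardt {K : Type} [Field K] [IsAlgClosed K]
    (n : ℕ) (hn : 4 ≤ n) (F : MvPolynomial (Fin (n + 1)) K)
    (hhom : F.IsHomogeneous 3)
    (hsmooth : ∀ v : Fin (n + 1) → K, v ≠ 0 → eval v F = 0 →
      ∃ i, eval v (pderiv i F) ≠ 0)
    (u : Fin (n + 1) → K) (e : Fin (n + 1) → K) (he : diffForm F u e = 1)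
    (hu : ∀ w, eval w F = 0 → diffForm F u w = 0 → diffForm F w u = 0)
    (w : Fin (n + 1) → K) (hw : diffForm F u w = 0) : diffForm F w u = 0 := by
  have hl : diffForm F u ≠ 0 := by intro h; simp [h] at he
  have hrk : Module.finrank K (LinearMap.ker (diffForm F u)) = n := by
    have := Module.Dual.finrank_ker_add_one_of_ne_zero (K := K) (f := diffForm F u) hl
    simpa using this
  let b0 := Module.finBasisOfFinrankEq K _ hrk
  let b : Fin n → Fin (n + 1) → K := fun j => (b0 j : Fin (n + 1) → K)
  have hbker : ∀ j, diffForm F u (b j) = 0 := fun j => (b0 j).2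
  have hspan : ∀ x, diffForm F u x = 0 → ∃ y : Fin n → K, ∑ j, y j • b j = x := by
    intro x hx
    refine ⟨fun j => b0.repr ⟨x, hx⟩ j, ?_⟩
    simpa only [Submodule.coe_sum, Submodule.coe_smul] using
      congrArg Subtype.val (b0.sum_repr ⟨x, hx⟩)
  have hinj : ∀ y : Fin n → K, ∑ j, y j • b j = 0 → y = 0 := by
    intro y hy
    have hli := Fintype.linearIndependent_iff.1 b0.linearIndependent y (Subtype.ext (by
      simpa [b] using hy))
    exact funext hli
  set f : MvPolynomial (Fin n) K := aeval (linSubst b) F with hfdef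
  have hf3 : f.IsHomogeneous 3 := by
    simpa only [one_mul] using hhom.aeval (linSubst b) (linSubst_homogeneous b)
  have hdir : ∀ z : Fin (n + 1) → K,
      (∑ i, C (z i) * pderiv i F : MvPolynomial (Fin (n + 1)) K).IsHomogeneous 2 :=
    fun z => IsHomogeneous.sum _ _ _ fun i _ => hhom.pderiv.C_mul _
  have hdirE : ∀ z v : Fin (n + 1) → K,
      eval v (∑ i, C (z i) * pderiv i F : MvPolynomial (Fin (n + 1)) K) = diffForm F v z := by
    intro z v; simp [diffForm_apply]
  -- `f` is not singular along a hyperplane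
  have hsing : ∀ M : (Fin n → K) →ₗ[K] K,
      (∀ y, M y = 0 → eval y f = 0 ∧ ∀ j, eval y (pderiv j f) = 0) → False := by
    intro M hM
    have hk : 1 < Module.finrank K (LinearMap.ker M) := by
      have h1 := LinearMap.finrank_range_add_finrank_ker M
      have h2 : Module.finrank K (LinearMap.range M) ≤ 1 := by
        simpa using Submodule.finrank_le (LinearMap.range M)
      simp at h1
      omega
    obtain ⟨y, hyM, hy0, hyq⟩ := exists_zero_of_homogeneous (d := 2) (by norm_num)
      (aeval (linSubst b) (∑ i, C (e i) * pderiv i F))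
      (by simpa using (hdir e).aeval (linSubst b) (linSubst_homogeneous b)) (LinearMap.ker M) hk
    rw [eval_linSubst, hdirE] at hyq
    obtain ⟨hfy, hdy⟩ := hM y hyM
    rw [hfdef, eval_linSubst] at hfy
    obtain ⟨i, hi⟩ := hsmooth _ (fun h => hy0 (hinj y h)) hfy
    set v := ∑ j, y j • b j with hv
    have hzero : ∀ x, diffForm F v x = 0 := by
      intro x
      obtain ⟨c, hc⟩ := hspan (x - diffForm F u x • e) (by simp [he])
      have hx : x = diffForm F u x • e + ∑ j, c j • b j := by rw [hc]; abel
      rw [hx, map_add, map_smul, hyq, map_sum]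
      simp only [map_smul]
      rw [Finset.sum_eq_zero]
      · simp
      · intro j _
        rw [hv, ← pderiv_linSubst, ← hfdef, hdy, smul_zero]
    apply hi
    have := hzero (Pi.single i 1)
    classical
    simpa [diffForm_apply, Pi.single_apply] using this
  have hf0 : f ≠ 0 := fun h => hsing 0 (by simp [h])
  have hsq : Squarefree f := by
    intro A hA
    by_contra hAu
    obtain ⟨M, hM⟩ := exists_linear_of_homogeneous_one A
      (homogeneous_of_sq_dvd_cubic f A hf3 hf0 hA hAu)
    obtain ⟨B, hB⟩ := hA
    refine hsing M fun y hy => ?_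
    rw [hM] at hy
    rw [hB]
    simp [hy]
  set Q : MvPolynomial (Fin n) K := aeval (linSubst b) (∑ i, C (u i) * pderiv i F) with hQdef
  have hQ2 : Q.IsHomogeneous 2 := by
    simpa only [one_mul] using (hdir u).aeval (linSubst b) (linSubst_homogeneous b)
  have hrad : Q ∈ (Ideal.span {f}).radical := by
    rw [← vanishingIdeal_zeroLocus_eq_radical (K := K), mem_vanishingIdeal_iff]
    intro y hy
    have hfy : eval y f = 0 := by
      have := hy f (Ideal.subset_span rfl)
      simpa [coe_aeval_eq_eval] using this
    rw [hfdef, eval_linSubst] at hfy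
    have hQy := hu _ hfy (by simp [map_sum, hbker])
    change eval y Q = 0
    rw [hQdef, eval_linSubst, hdirE, hQy]
  obtain ⟨k, hk⟩ := hrad
  rw [Ideal.mem_span_singleton] at hk
  have hdvd : f ∣ Q := hsq.isRadical k Q hk
  have hQ0 : Q = 0 := by
    by_contra hne
    have h1 := totalDegree_le_of_dvd_of_isDomain hdvd hne
    rw [hf3.totalDegree hf0, hQ2.totalDegree hne] at h1
    omega
  obtain ⟨y, hy⟩ := hspan w hw
  rw [← hdirE, ← hy, ← eval_linSubst, ← hQdef, hQ0, map_zero]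

/-! ### Equations for the Eckardt locus -/

/-- Let `K` be algebraically closed, `n ≥ 4`, and `F` a cubic form in `n+1`
variables with smooth zero locus `X = V(F) ⊂ P^n`. Then the set
`E = {u : F(u) = 0 and u is an Eckardt vector}` is Zariski closed in `K^{n+1}`, i.e. it is
the common zero set of a family of polynomials. -/
theorem stmt_10 (K : Type) [Field K] [IsAlgClosed K]
    (n : ℕ) (hn : 4 ≤ n) (F : MvPolynomial (Fin (n + 1)) K)
    (hF : F ≠ 0) (hhom : F.IsHomogeneous 3)
    (hsmooth : ∀ v : Fin (n + 1) → K, v ≠ 0 → eval v F = 0 →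
      ∃ i, eval v (pderiv i F) ≠ 0)
    (E : Set (Fin (n + 1) → K))
    (hE : E = {u | eval u F = 0 ∧ IsEckardtVec F u}) :
    ∃ G : Set (MvPolynomial (Fin (n + 1)) K), E = {u | ∀ g ∈ G, eval u g = 0} := by
  classical
  -- `dF_u(x)` as a polynomial in `u`
  let ell : (Fin (n + 1) → K) → MvPolynomial (Fin (n + 1)) K :=
    fun x => ∑ i, C (x i) * pderiv i F
  -- `Q_u (dF_u(y) x - dF_u(x) y)` as a polynomial in `u`, for `xy = (x, y)`
  let g : (Fin (n + 1) → K) × (Fin (n + 1) → K) → MvPolynomial (Fin (n + 1)) K := fun xy =>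
    ∑ i, X i * aeval (fun j => ell xy.2 * C (xy.1 j) - ell xy.1 * C (xy.2 j)) (pderiv i F)
  have hell : ∀ u x, eval u (ell x) = diffForm F u x := by
    intro u x; simp [ell, diffForm_apply]
  have hg : ∀ u x y, eval u (g (x, y)) =
      diffForm F (diffForm F u y • x - diffForm F u x • y) u := by
    intro u x y
    simp only [g, map_sum, map_mul, eval_X, eval_aeval, map_sub, hell, eval_C, diffForm_apply F _ u]
    rfl
  have hecard : ∀ u, eval u F = 0 → (IsEckardtVec F u ↔
      ∀ w, eval w F = 0 → diffForm F u w = 0 → diffForm F w u = 0) := by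
    intro u hu0
    constructor
    · intro h w hw hw'
      have := h w hw (by rw [← diffForm_apply]; exact hw') 1 1
      rw [cubic_expand F hhom, hu0, hw, hw'] at this
      simpa using this
    · intro h w hw hw' s t
      rw [← diffForm_apply] at hw'
      rw [cubic_expand F hhom, hu0, hw, hw', h w hw hw']
      simp
  have hnorm : ∀ u, u ≠ 0 → eval u F = 0 → ∃ e, diffForm F u e = 1 := by
    intro u hu hu0
    obtain ⟨i, hi⟩ := hsmooth u hu hu0
    exact ⟨Pi.single i (eval u (pderiv i F))⁻¹, by
      simp [diffForm_apply, Pi.single_apply, hi]⟩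
  refine ⟨insert F (Set.range g), ?_⟩
  rw [hE]
  ext u
  simp only [Set.mem_ofPred_eq, Set.forall_mem_insert, Set.forall_mem_range, Prod.forall]
  refine and_congr_right fun hu0 => ?_
  rw [hecard u hu0]
  by_cases hu : u = 0
  · subst hu
    refine iff_of_true (fun w _ _ => map_zero _) fun x y => ?_
    rw [hg, map_zero]
  obtain ⟨e, he⟩ := hnorm u hu hu0
  constructor
  · intro h x y
    rw [hg]
    exact diffForm_eq_zero_of_eckardt n hn F hhom hsmooth u e he h _ (by simp [mul_comm])
  · intro h w _ hw
    have := h w e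
    rw [hg, he, hw] at this
    simpa using this
end
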